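/- Let w = x^a y^b x^c y^d, where a, b, c, d are nonzero integers. Then either the family of word maps P_{w,q}: SL(2,q) × SL(2,q) → SL(2,q), with q ranging over all prime powers, is equidistributed, or a = c and b = d, i.e., w = (x^a y^b)^2. -/

import Mathlib

open Matrix Polynomial

abbrev SL2 (K : Type) [CommRing K] : Type := Matrix.SpecialLinearGroup (Fin 2) K

abbrev PSL2 (K : Type) [CommRing K] : Type := SL2 K ⧸ Subgroup.center (SL2 K)

/-- Evaluation of a word `w ∈ F₂` at a pair of group elements. -/
def wordEval {G : Type*} [Group G] (w : FreeGroup (Fin 2)) (g₁ g₂ : G) : G :=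
  (FreeGroup.lift ![g₁, g₂]) w

/-- The word map `P_{w,G} : G × G → G` for `G = SL(2,K)`. -/
def wordMap (w : FreeGroup (Fin 2)) (K : Type) [CommRing K] :
    SL2 K × SL2 K → SL2 K := fun g => wordEval w g.1 g.2

/-- The point `(tr x, tr xy, tr y)`. -/
def trPoint {K : Type} [CommRing K] (x y : SL2 K) : Fin 3 → K :=
  ![Matrix.trace (x : Matrix (Fin 2) (Fin 2) K),
    Matrix.trace ((x * y : SL2 K) : Matrix (Fin 2) (Fin 2) K),
    Matrix.trace (y : Matrix (Fin 2) (Fin 2) K)]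

/-- `f ∈ ℤ[s,u,t]` is the trace polynomial of the word `w`. -/
def IsTracePolynomial (w : FreeGroup (Fin 2)) (f : MvPolynomial (Fin 3) ℤ) : Prop :=
  ∀ (K : Type) [CommRing K], ∀ x y : SL2 K,
    Matrix.trace ((wordEval w x y : SL2 K) : Matrix (Fin 2) (Fin 2) K) =
      MvPolynomial.eval (trPoint x y) (MvPolynomial.map (Int.castRingHom K) f)

/-- `f : X → Y` is `ε`-equidistributed. -/
def IsEquidistributed {X Y : Type*} (f : X → Y) (ε : ℝ) : Prop :=
  ∃ Y' : Set Y,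
    (1 - ε) * (Nat.card Y) < (Nat.card Y' : ℝ) ∧
    ∀ y ∈ Y',
      |(Nat.card {x : X // f x = y} : ℝ) - (Nat.card X : ℝ) / (Nat.card Y)| <
        ε * (Nat.card X) / (Nat.card Y)

/-- The family of word maps on `SL(2,p^n)` is `p`-equidistributed. -/
def IsPEquidistributed (w : FreeGroup (Fin 2)) (p : ℕ) (hp : p.Prime) : Prop :=
  letI : Fact p.Prime := ⟨hp⟩
  ∃ ε : ℕ → ℝ,
    Filter.Tendsto (fun n : ℕ => ε (p ^ n)) Filter.atTop (nhds 0) ∧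
    ∀ᶠ n : ℕ in Filter.atTop,
      IsEquidistributed (wordMap w (GaloisField p n)) (ε (p ^ n))

/-- The family of word maps on `SL(2,q)`, `q` ranging over all prime powers,
is equidistributed. -/
def IsEquidistributedFamily (w : FreeGroup (Fin 2)) : Prop :=
  ∃ ε : ℕ → ℝ,
    Filter.Tendsto ε Filter.atTop (nhds 0) ∧
    ∀ (p : ℕ) (hp : p.Prime),
      letI : Fact p.Prime := ⟨hp⟩
      ∀ᶠ n : ℕ in Filter.atTop,
        IsEquidistributed (wordMap w (GaloisField p n)) (ε (p ^ n))

/-- Reduction of an integral polynomial mod `p`. -/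
noncomputable def reduceMod (p : ℕ) (P : MvPolynomial (Fin 3) ℤ) : MvPolynomial (Fin 3) (ZMod p) :=
  MvPolynomial.map (Int.castRingHom (ZMod p)) P

/-- `P = h ∘ Q` with `deg Q ≥ 1`, `deg h ≥ 2`. -/
def IsCompositePoly (F : Type) [CommRing F] (P : MvPolynomial (Fin 3) F) : Prop :=
  ∃ (Q : MvPolynomial (Fin 3) F) (h : Polynomial F),
    1 ≤ Q.totalDegree ∧ 2 ≤ h.natDegree ∧ P = Polynomial.aeval Q h

def IsPComposite (p : ℕ) (P : MvPolynomial (Fin 3) ℤ) : Prop :=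
  IsCompositePoly (ZMod p) (reduceMod p P)

/-- `h` is a permutation polynomial of every finite extension of `F_p`. -/
def IsPermAllExt (p : ℕ) (h : Polynomial (ZMod p)) : Prop :=
  ∀ (K : Type) [Field K] [Algebra (ZMod p) K] [Finite K],
    Function.Bijective fun z : K => Polynomial.aeval z h

def IsPSpecial (p : ℕ) (P : MvPolynomial (Fin 3) ℤ) : Prop :=
  IsPComposite p P ∧
    ∃ (Q : MvPolynomial (Fin 3) (ZMod p)) (h : Polynomial (ZMod p)),
      1 ≤ Q.totalDegree ∧ 2 ≤ h.natDegree ∧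
      reduceMod p P = Polynomial.aeval Q h ∧ IsPermAllExt p h

def AlmostNoncomposite (P : MvPolynomial (Fin 3) ℤ) : Prop :=
  ∀ p : ℕ, p.Prime → ¬ IsPComposite p P ∨ IsPSpecial p P

/-- The reduced word `x^{a₁}y^{b₁} ⋯ x^{a_r}y^{b_r}`. -/
def wordOf {r : ℕ} (a b : Fin r → ℤ) : FreeGroup (Fin 2) :=
  (List.ofFn fun i : Fin r =>
    FreeGroup.of (0 : Fin 2) ^ a i * FreeGroup.of (1 : Fin 2) ^ b i).prod

set_option linter.unusedSectionVars false
open Matrix Polynomial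
set_option linter.unusedVariables false
set_option linter.unusedSimpArgs false

set_option linter.unusedVariables false
set_option linter.unusedSimpArgs false

/-! ### Algebraic identities -/

noncomputable def pA (K : Type) [CommRing K] (n : ℤ) (s : K) : K :=
  (Polynomial.Chebyshev.S K (n - 1)).eval s
noncomputable def pB (K : Type) [CommRing K] (n : ℤ) (s : K) : K :=
  -(Polynomial.Chebyshev.S K (n - 2)).eval s
noncomputable def pC (K : Type) [CommRing K] (n : ℤ) (s : K) : K :=
  (Polynomial.Chebyshev.C K n).eval s

lemma pA_zero {K : Type} [CommRing K] (s : K) : pA K 0 s = 0 := by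
  simp [pA]
lemma pB_zero {K : Type} [CommRing K] (s : K) : pB K 0 s = 1 := by
  simp [pB]
lemma pA_succ {K : Type} [CommRing K] (n : ℤ) (s : K) :
    pA K (n + 1) s = s * pA K n s + pB K n s := by
  have := congrArg (Polynomial.eval s) (Polynomial.Chebyshev.S_eq K n)
  simp at this
  simp [pA, pB, this]; ring
lemma pB_succ {K : Type} [CommRing K] (n : ℤ) (s : K) :
    pB K (n + 1) s = - pA K n s := by
  simp only [pA, pB]; congr 3; ring
lemma pC_eq {K : Type} [CommRing K] (n : ℤ) (s : K) :
    pC K n s = s * pA K n s + 2 * pB K n s := by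
  have h1 := congrArg (Polynomial.eval s) (Polynomial.Chebyshev.S_eq K n)
  have h2 := congrArg (Polynomial.eval s) (Polynomial.Chebyshev.C_eq_S_sub_X_mul_S K n)
  simp at h1 h2
  simp only [pA, pB, pC, h2, h1]; ring
lemma p_norm {K : Type} [CommRing K] (n : ℤ) (s : K) :
    pA K n s ^ 2 + pA K n s * pB K n s * s + pB K n s ^ 2 = 1 := by
  have h1 := congrArg (Polynomial.eval s) (Polynomial.Chebyshev.S_sq_add_S_sq K (n-2))
  have : n - 2 + 1 = n - 1 := by ring
  rw [this] at h1
  simp at h1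
  simp only [pA, pB]
  linear_combination h1
lemma pA_neg {K : Type} [CommRing K] (n : ℤ) (s : K) : pA K (-n) s = - pA K n s := by
  have h1 := congrArg (Polynomial.eval s) (Polynomial.Chebyshev.S_neg_sub_one K n)
  simp at h1
  simp [pA, h1]
lemma pB_neg {K : Type} [CommRing K] (n : ℤ) (s : K) :
    pB K (-n) s = s * pA K n s + pB K n s := by
  have h1 := congrArg (Polynomial.eval s) (Polynomial.Chebyshev.S_neg_sub_two K n)
  have h2 := congrArg (Polynomial.eval s) (Polynomial.Chebyshev.S_eq K n)
  simp at h1 h2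
  simp [pA, pB, h1, h2]; ring

lemma p_add {K : Type} [CommRing K] (m n : ℤ) (s : K) :
    pA K (m + n) s = pA K m s * pA K n s * s + pA K m s * pB K n s + pB K m s * pA K n s ∧
    pB K (m + n) s = pB K m s * pB K n s - pA K m s * pA K n s := by
  induction n using Int.induction_on with
  | zero => simp [pA_zero, pB_zero]
  | succ k ih =>
    rw [← add_assoc, pA_succ, pB_succ, pA_succ, pB_succ, ih.1, ih.2]
    constructor <;> ring
  | pred k ih =>
    have e1 := pA_succ (K := K) (m + (-k - 1)) s
    have e2 := pB_succ (K := K) (m + (-k - 1)) s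
    have e3 := pA_succ (K := K) (-k - 1) s
    have e4 := pB_succ (K := K) (-k - 1) s
    have h1 : m + (-(k:ℤ) - 1) + 1 = m + -(k:ℤ) := by ring
    have h2 : -(k:ℤ) - 1 + 1 = -(k:ℤ) := by ring
    rw [h1, ih.1] at e1
    rw [h1, ih.2] at e2
    rw [h2] at e3 e4
    rw [e3, e4] at e1 e2
    constructor
    · linear_combination e2
    · linear_combination -e1 - s * e2

lemma pC_add {K : Type} [CommRing K] (m n : ℤ) (s : K) :
    pC K (m + n) s = pA K m s * pA K n s * (s^2-2) +
      (pA K m s * pB K n s + pB K m s * pA K n s) * s + 2 * pB K m s * pB K n s := by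
  rw [pC_eq, (p_add m n s).1, (p_add m n s).2]; ring
lemma pC_sub {K : Type} [CommRing K] (m n : ℤ) (s : K) :
    pC K (m - n) s = 2 * pA K m s * pA K n s +
      (pA K m s * pB K n s + pB K m s * pA K n s) * s + 2 * pB K m s * pB K n s := by
  rw [sub_eq_add_neg, pC_add, pA_neg, pB_neg]; ring

lemma sl2_zpow {K : Type} [CommRing K] (x : SL2 K) (n : ℤ) :
    ((x ^ n : SL2 K) : Matrix (Fin 2) (Fin 2) K) =
      pA K n (Matrix.trace (x : Matrix (Fin 2) (Fin 2) K)) • (x : Matrix (Fin 2) (Fin 2) K)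
      + pB K n (Matrix.trace (x : Matrix (Fin 2) (Fin 2) K)) • 1 := by
  have hdet := x.det_coe
  rw [Matrix.det_fin_two] at hdet
  induction n using Int.induction_on with
  | zero => simp [pA_zero, pB_zero]
  | succ k ih =>
    rw [_root_.zpow_add_one, Matrix.SpecialLinearGroup.coe_mul, ih, pA_succ, pB_succ]
    ext i j
    fin_cases i <;> fin_cases j <;>
      simp [Matrix.mul_apply, Fin.sum_univ_two, Matrix.trace_fin_two] <;>
      first | ring1 | linear_combination (-pA K k (x.1 0 0 + x.1 1 1)) * hdet | linear_combination (pA K k (x.1 0 0 + x.1 1 1)) * hdet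
  | pred k ih =>
    have e3 := pA_succ (K := K) (-k - 1) (Matrix.trace (x : Matrix (Fin 2) (Fin 2) K))
    have e4 := pB_succ (K := K) (-k - 1) (Matrix.trace (x : Matrix (Fin 2) (Fin 2) K))
    have h2 : -(k:ℤ) - 1 + 1 = -(k:ℤ) := by ring
    rw [h2] at e3 e4
    rw [e3, e4] at ih
    rw [_root_.zpow_sub_one, Matrix.SpecialLinearGroup.coe_mul, ih, Matrix.SpecialLinearGroup.coe_inv, Matrix.adjugate_fin_two]
    ext i j
    fin_cases i <;> fin_cases j <;>
      simp [Matrix.mul_apply, Fin.sum_univ_two, Matrix.trace_fin_two] <;>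
      first | ring1 | linear_combination (-pA K (-k-1) (x.1 0 0 + x.1 1 1)) * hdet | linear_combination (pA K (-k-1) (x.1 0 0 + x.1 1 1)) * hdet |
        linear_combination (x.1 0 0 * pA K (-k-1) (x.1 0 0 + x.1 1 1)+x.1 1 1 * pA K (-k-1) (x.1 0 0 + x.1 1 1)+pB K (-k-1) (x.1 0 0 + x.1 1 1)) * hdet 

section
variable {K : Type} [CommRing K]

/-- coefficients of the quadratic polynomial in `u` -/
def g2 (A A' B B' C C' D D' s t : K) : K := A * B * C * D
def g1 (A A' B B' C C' D D' s t : K) : K :=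
  A*B*C*D'*s + A*B*C'*D*t + A*B*C'*D' + A*B'*C*D*s + A*B'*C'*D + A'*B*C*D*t + A'*B*C*D' + A'*B'*C*D
def g0 (A A' B B' C C' D D' s t : K) : K :=
  -2*A*B*C*D - A*B*C*D'*t - A*B*C'*D*s - A*B'*C*D*t + A*B'*C*D'*(s^2-2) + A*B'*C'*D'*s
   - A'*B*C*D*s + A'*B*C'*D*(t^2-2)+A'*B*C'*D'*t + A'*B'*C*D'*s + A'*B'*C'*D*t + 2*A'*B'*C'*D'

lemma trace_quad (A A' B B' C C' D D' : K) (x y : SL2 K) (s t u : K)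
    (hs : s = x.1 0 0 + x.1 1 1) (ht : t = y.1 0 0 + y.1 1 1)
    (hu : u = x.1 0 0 * y.1 0 0 + x.1 0 1 * y.1 1 0 + x.1 1 0 * y.1 0 1 + x.1 1 1 * y.1 1 1) :
    Matrix.trace ((A • x.1 + A' • (1 : Matrix (Fin 2) (Fin 2) K)) * (B • y.1 + B' • 1) *
      (C • x.1 + C' • 1) * (D • y.1 + D' • 1)) =
    g2 A A' B B' C C' D D' s t * u^2 + g1 A A' B B' C C' D D' s t * u + g0 A A' B B' C C' D D' s t := by
  have hx := x.det_coe
  have hy := y.det_coe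
  rw [Matrix.det_fin_two] at hx hy
  have tx : x.1 * x.1 = s • x.1 - 1 := by
    ext i j
    fin_cases i <;> fin_cases j <;> simp [Matrix.mul_apply, Fin.sum_univ_two, hs] <;>
      first | ring1 | linear_combination hx | linear_combination -hx
  have ty : y.1 * y.1 = t • y.1 - 1 := by
    ext i j
    fin_cases i <;> fin_cases j <;> simp [Matrix.mul_apply, Fin.sum_univ_two, ht] <;>
      first | ring1 | linear_combination hy | linear_combination -hy
  have hxy : (x.1 * y.1) * (x.1 * y.1) = u • (x.1 * y.1) - 1 := by
    have h := (x * y).det_coe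
    rw [Matrix.SpecialLinearGroup.coe_mul] at h
    generalize hM : x.1 * y.1 = M at h
    have : u = M 0 0 + M 1 1 := by
      rw [← hM, hu]; simp [Matrix.mul_apply, Fin.sum_univ_two]; ring
    rw [Matrix.det_fin_two] at h
    ext i j
    fin_cases i <;> fin_cases j <;> simp [Matrix.mul_apply, Fin.sum_univ_two, this] <;>
      first | ring1 | linear_combination h | linear_combination -h
  have t1 : x.1.trace = s := by rw [Matrix.trace_fin_two, hs]
  have t2 : y.1.trace = t := by rw [Matrix.trace_fin_two, ht]
  have t3 : (x.1 * y.1).trace = u := by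
    rw [Matrix.trace_fin_two, hu]; simp [Matrix.mul_apply, Fin.sum_univ_two]; ring
  have t3' : (y.1 * x.1).trace = u := by rw [Matrix.trace_mul_comm, t3]
  have t4 : (x.1 * x.1).trace = s^2 - 2 := by
    rw [tx]; simp [t1]; ring
  have t5 : (y.1 * y.1).trace = t^2 - 2 := by
    rw [ty]; simp [t2]; ring
  have t6 : (x.1 * y.1 * x.1).trace = s * u - t := by
    rw [Matrix.trace_mul_comm, ← mul_assoc, tx, sub_mul]; simp [t3, t2]
  have t7 : (x.1 * x.1 * y.1).trace = s * u - t := by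
    rw [tx, sub_mul]; simp [t3, t2]
  have t8 : (x.1 * y.1 * y.1).trace = t * u - s := by
    rw [mul_assoc, ty, mul_sub]; simp [t3, t1]
  have t9 : (y.1 * x.1 * y.1).trace = t * u - s := by
    rw [Matrix.trace_mul_comm, ← mul_assoc, ty, sub_mul]; simp [t3', t1]
  have t10 : (x.1 * y.1 * x.1 * y.1).trace = u^2 - 2 := by
    rw [mul_assoc (x.1 * y.1), hxy]; simp [t3]; ring
  simp only [add_mul, mul_add, smul_mul_assoc, mul_smul_comm, mul_one, one_mul, Matrix.trace_add,
    Matrix.trace_smul, smul_eq_mul, t1, t2, t3, t3', t4, t5, t6, t7, t8, t9, t10]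
  simp [g2, g1, g0]
  ring

lemma disc_identity (A A' B B' C C' D D' s t X X' Y Y' : K)
    (hX : X = A * C * (s^2-2) + (A * C' + A' * C) * s + 2 * A' * C')
    (hX' : X' = 2 * A * C + (A * C' + A' * C) * s + 2 * A' * C')
    (hY : Y = B * D * (t^2-2) + (B * D' + B' * D) * t + 2 * B' * D')
    (hY' : Y' = 2 * B * D + (B * D' + B' * D) * t + 2 * B' * D')
    (na : A^2 + A * A' * s + A'^2 = 1) (nc : C^2 + C * C' * s + C'^2 = 1)
    (nb : B^2 + B * B' * t + B'^2 = 1) (nd : D^2 + D * D' * t + D'^2 = 1) :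
    (s^2-4)*(t^2-4)*(g1 A A' B B' C C' D D' s t ^ 2 - 4 * g2 A A' B B' C C' D D' s t * g0 A A' B B' C C' D D' s t)
      = (X * Y' + X' * Y - X' * Y')^2 - 4 * (X^2 + Y^2 - 4) := by
  have : (s^2-4)*(t^2-4)*(g1 A A' B B' C C' D D' s t ^ 2 - 4 * g2 A A' B B' C C' D D' s t * g0 A A' B B' C C' D D' s t)
      = (X * Y' + X' * Y - X' * Y')^2 - 4 * (X^2 * ((B^2 + B * B' * t + B'^2) * (D^2 + D * D' * t + D'^2))
       + Y^2 * ((A^2 + A * A' * s + A'^2) * (C^2 + C * C' * s + C'^2)) - 4 * ((A^2 + A * A' * s + A'^2) * (C^2 + C * C' * s + C'^2) * ((B^2 + B * B' * t + B'^2) * (D^2 + D * D' * t + D'^2)))) := by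
    subst hX hX' hY hY'
    simp only [g2, g1, g0]
    ring
  rw [this, na, nb, nc, nd]; ring
end

set_option linter.unusedSectionVars false

/-! ### The trace polynomial, and counting -/

section
variable {K : Type} [Field K]

noncomputable def f2 (a b c d : ℤ) (s t : K) : K :=
  g2 (pA K a s) (pB K a s) (pA K b t) (pB K b t) (pA K c s) (pB K c s) (pA K d t) (pB K d t) s t
noncomputable def f1 (a b c d : ℤ) (s t : K) : K :=
  g1 (pA K a s) (pB K a s) (pA K b t) (pB K b t) (pA K c s) (pB K c s) (pA K d t) (pB K d t) s t
noncomputable def f0 (a b c d : ℤ) (s t : K) : K :=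
  g0 (pA K a s) (pB K a s) (pA K b t) (pB K b t) (pA K c s) (pB K c s) (pA K d t) (pB K d t) s t

noncomputable def FF (a b c d : ℤ) (s t : K) : K :=
  (pC K (a + c) s - pC K (a - c) s) * (pC K (b + d) t - pC K (b - d) t)
noncomputable def HH (a b c d : ℤ) (s t : K) : K :=
  (pC K (a + c) s * pC K (b - d) t + pC K (a - c) s * pC K (b + d) t
    - pC K (a - c) s * pC K (b - d) t) ^ 2 - 4 * (pC K (a + c) s ^ 2 + pC K (b + d) t ^ 2 - 4)

lemma f2_FF (a b c d : ℤ) (s t : K) :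
    (s^2-4)*(t^2-4) * f2 a b c d s t = FF a b c d s t := by
  simp only [f2, FF, g2, pC_add, pC_sub]; ring

lemma disc_HH (a b c d : ℤ) (s t : K) :
    (s^2-4)*(t^2-4) * (f1 a b c d s t ^ 2 - 4 * f2 a b c d s t * f0 a b c d s t)
      = HH a b c d s t := by
  exact disc_identity _ _ _ _ _ _ _ _ s t _ _ _ _ (pC_add _ _ _) (pC_sub _ _ _) (pC_add _ _ _)
    (pC_sub _ _ _) (p_norm _ _) (p_norm _ _) (p_norm _ _) (p_norm _ _)

def trS (x : SL2 K) : K := x.1 0 0 + x.1 1 1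
def trU (x y : SL2 K) : K :=
  x.1 0 0 * y.1 0 0 + x.1 0 1 * y.1 1 0 + x.1 1 0 * y.1 0 1 + x.1 1 1 * y.1 1 1

def theWord (a b c d : ℤ) : FreeGroup (Fin 2) :=
  (FreeGroup.of (0 : Fin 2) ^ a * FreeGroup.of (1 : Fin 2) ^ b *
        FreeGroup.of (0 : Fin 2) ^ c * FreeGroup.of (1 : Fin 2) ^ d)

lemma word_trace (a b c d : ℤ) (x y : SL2 K) :
    trS (wordMap (theWord a b c d) K (x, y)) =
      f2 a b c d (trS x) (trS y) * trU x y ^ 2 + f1 a b c d (trS x) (trS y) * trU x y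
        + f0 a b c d (trS x) (trS y) := by
  have h : wordMap (theWord a b c d) K (x, y) = x ^ a * y ^ b * x ^ c * y ^ d := by
    simp [wordMap, wordEval, theWord]
  have h2 : trS (wordMap (theWord a b c d) K (x, y)) =
      Matrix.trace (wordMap (theWord a b c d) K (x, y)).1 := by
    rw [Matrix.trace_fin_two]; rfl
  rw [h2, h, Matrix.SpecialLinearGroup.coe_mul, Matrix.SpecialLinearGroup.coe_mul,
    Matrix.SpecialLinearGroup.coe_mul, sl2_zpow, sl2_zpow, sl2_zpow, sl2_zpow]
  rw [trace_quad _ _ _ _ _ _ _ _ x y (trS x) (trS y) (trU x y) rfl rfl rfl]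
  simp only [f2, f1, f0, Matrix.trace_fin_two]
  rfl

lemma natDegree_chebC (n : ℕ) : (Polynomial.Chebyshev.C K n).natDegree ≤ n := by
  induction n using Nat.strong_induction_on with
  | _ n ih =>
    match n with
    | 0 => 
      have : (2 : K[X]) = Polynomial.C 2 := (map_ofNat Polynomial.C 2).symm
      simp only [Nat.cast_zero, Polynomial.Chebyshev.C_zero, this, natDegree_C, le_refl]
    | 1 => simp
    | n + 2 =>
      have h : ((n + 2 : ℕ) : ℤ) = (n : ℤ) + 2 := by push_cast; ring
      rw [h, Polynomial.Chebyshev.C_add_two]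
      have h1 := ih (n+1) (by omega)
      have h2 := ih n (by omega)
      push_cast at h1
      refine (natDegree_sub_le _ _).trans (max_le ?_ (by omega))
      refine (natDegree_mul_le).trans ?_
      have := natDegree_X_le (R := K)
      omega

lemma coeff_chebC (n : ℕ) : (Polynomial.Chebyshev.C K (n + 1 : ℕ)).coeff (n + 1) = 1 := by
  induction n with
  | zero => simp
  | succ n ih =>
    have h : ((n + 1 + 1 : ℕ) : ℤ) = (n : ℤ) + 2 := by push_cast; ring
    rw [h, Polynomial.Chebyshev.C_add_two, coeff_sub, coeff_X_mul]
    rw [coeff_eq_zero_of_natDegree_lt (p := Polynomial.Chebyshev.C K (n:ℤ))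
      (lt_of_le_of_lt (natDegree_chebC n) (by omega))]
    push_cast at ih
    rw [ih]; simp

lemma natDegree_chebC_int (n : ℤ) : (Polynomial.Chebyshev.C K n).natDegree ≤ n.natAbs := by
  rw [← Polynomial.Chebyshev.C_natAbs]; exact natDegree_chebC _
lemma coeff_chebC_int (n : ℤ) (hn : n ≠ 0) :
    (Polynomial.Chebyshev.C K n).coeff n.natAbs = 1 := by
  rw [← Polynomial.Chebyshev.C_natAbs]
  obtain ⟨m, hm⟩ := Nat.exists_eq_succ_of_ne_zero (Int.natAbs_ne_zero.mpr hn)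
  rw [hm]; exact coeff_chebC m

variable [Fintype K] [DecidableEq K]

lemma card_roots_le (P : K[X]) (m k : ℕ) (hm : P.natDegree ≤ m) (hk : P.coeff k ≠ 0) :
    (Finset.univ.filter fun z : K => P.eval z = 0).card ≤ m := by
  have hP : P ≠ 0 := by rintro rfl; simp at hk
  calc _ ≤ P.roots.toFinset.card := by
        apply Finset.card_le_card
        intro z hz
        simp at hz
        simp [hP, hz]
    _ ≤ Multiset.card P.roots := Multiset.toFinset_card_le _
    _ ≤ P.natDegree := P.card_roots'
    _ ≤ m := hm

lemma card_quad_le (A B C : K) (hA : A ≠ 0) :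
    (Finset.univ.filter fun z : K => A * z^2 + B * z + C = 0).card ≤ 2 := by
  have := card_roots_le (Polynomial.C A * X^2 + Polynomial.C B * X + Polynomial.C C) 2 2
    (by compute_degree) (by
      have : (Polynomial.C A * X^2 + Polynomial.C B * X + Polynomial.C C : K[X]).coeff 2 = A := by
        compute_degree
        simp
      rwa [this])
  simpa using this

lemma max_pm (a c : ℤ) (ha : a ≠ 0) (hc : c ≠ 0) :
    ((a+c).natAbs < (a-c).natAbs) ∨ ((a-c).natAbs < (a+c).natAbs) := by
  omega

/-- few `s` with `X = X'` -/
lemma card_XX' (a c : ℤ) (ha : a ≠ 0) (hc : c ≠ 0) :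
    (Finset.univ.filter fun s : K => pC K (a + c) s - pC K (a - c) s = 0).card
      ≤ a.natAbs + c.natAbs := by
  have h1 := natDegree_chebC_int (K := K) (a + c)
  have h2 := natDegree_chebC_int (K := K) (a - c)
  have key : ∃ k, (Polynomial.Chebyshev.C K (a+c) - Polynomial.Chebyshev.C K (a-c)).coeff k ≠ 0 := by
    rcases max_pm a c ha hc with h | h
    · refine ⟨(a-c).natAbs, ?_⟩
      rw [coeff_sub, coeff_chebC_int _ (by omega), coeff_eq_zero_of_natDegree_lt (lt_of_le_of_lt h1 h)]
      simp
    · refine ⟨(a+c).natAbs, ?_⟩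
      rw [coeff_sub, coeff_chebC_int _ (by omega), coeff_eq_zero_of_natDegree_lt (lt_of_le_of_lt h2 h)]
      simp
  obtain ⟨k, hk⟩ := key
  have := card_roots_le _ (a.natAbs + c.natAbs) k
    ((natDegree_sub_le _ _).trans (max_le (h1.trans (by omega)) (h2.trans (by omega)))) hk
  refine le_trans (le_of_eq ?_) this
  congr 1; ext; simp only [Finset.mem_filter, Finset.mem_univ, true_and]; simp [pC]

lemma card_X'4 (n : ℤ) (hn : n ≠ 0) :
    (Finset.univ.filter fun s : K => pC K n s ^ 2 - 4 = 0).card ≤ 2 * n.natAbs := by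
  have h1 := natDegree_chebC_int (K := K) n
  have h4 : (4 : K[X]) = Polynomial.C 4 := (map_ofNat Polynomial.C 4).symm
  have hc : ((Polynomial.Chebyshev.C K n) ^ 2 - 4).coeff (2 * n.natAbs) ≠ 0 := by
    rw [coeff_sub, coeff_pow_of_natDegree_le h1, coeff_chebC_int n hn, h4, coeff_C,
      if_neg (by omega)]
    simp
  have := card_roots_le _ (2 * n.natAbs) _ ?_ hc
  · refine le_trans (le_of_eq ?_) this
    congr 1; ext; simp only [Finset.mem_filter, Finset.mem_univ, true_and]; simp [pC]
  · refine (natDegree_sub_le _ _).trans (max_le ?_ ?_)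
    · refine natDegree_pow_le.trans ?_
      omega
    · rw [h4]; simp

lemma card_t_le (b d : ℤ) (hb : b ≠ 0) (hd : d ≠ 0) (x x' κ : K) (h1 : x - x' ≠ 0)
    (h2 : x' ^ 2 - 4 ≠ 0) :
    (Finset.univ.filter fun t : K => (x * pC K (b - d) t + x' * pC K (b + d) t
    - x' * pC K (b - d) t) ^ 2 - 4 * (x ^ 2 + pC K (b + d) t ^ 2 - 4)
      = κ * ((x - x') * (pC K (b + d) t - pC K (b - d) t))).card
      ≤ 2 * (b.natAbs + d.natAbs) := by
  obtain ⟨N, hN⟩ : ∃ N, N = max (b+d).natAbs (b-d).natAbs := ⟨_, rfl⟩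
  have hN1 : 1 ≤ N := by omega
  have hY := (natDegree_chebC_int (K := K) (b + d)).trans (show (b+d).natAbs ≤ N by omega)
  have hY' := (natDegree_chebC_int (K := K) (b - d)).trans (show (b-d).natAbs ≤ N by omega)
  have hcases : ((Polynomial.Chebyshev.C K (b+d)).coeff N = 0 ∧ (Polynomial.Chebyshev.C K (b-d)).coeff N = 1) ∨
     ((Polynomial.Chebyshev.C K (b+d)).coeff N = 1 ∧ (Polynomial.Chebyshev.C K (b-d)).coeff N = 0) := by
    rcases max_pm b d hb hd with h | h
    · left
      have : N = (b-d).natAbs := by omega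
      rw [this]
      exact ⟨coeff_eq_zero_of_natDegree_lt (lt_of_le_of_lt (natDegree_chebC_int _) h), coeff_chebC_int _ (by omega)⟩
    · right
      have : N = (b+d).natAbs := by omega
      rw [this]
      exact ⟨coeff_chebC_int _ (by omega), coeff_eq_zero_of_natDegree_lt (lt_of_le_of_lt (natDegree_chebC_int _) h)⟩
  have hNb : 2 * N ≤ 2 * (b.natAbs + d.natAbs) := by omega
  have e1 : ∀ t, pC K (b + d) t = (Polynomial.Chebyshev.C K (b+d)).eval t := fun _ => rfl
  have e2 : ∀ t, pC K (b - d) t = (Polynomial.Chebyshev.C K (b-d)).eval t := fun _ => rfl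
  simp only [e1, e2]
  generalize Polynomial.Chebyshev.C K (b+d) = Y at *
  generalize Polynomial.Chebyshev.C K (b-d) = Y' at *
  let L : K[X] := Polynomial.C x * Y' + Polynomial.C x' * Y - Polynomial.C x' * Y'
  have hL : L.natDegree ≤ N := by
    refine (natDegree_sub_le _ _).trans (max_le ((natDegree_add_le _ _).trans (max_le ?_ ?_)) ?_)
    all_goals exact (natDegree_C_mul_le _ _).trans (by assumption)
  let R : K[X] := Polynomial.C (4 * x^2 - 16) + Polynomial.C (κ * (x - x')) * (Y - Y')
  have hR : R.natDegree ≤ N := by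
    refine (natDegree_add_le _ _).trans (max_le (by rw [natDegree_C]; omega) ?_)
    exact (natDegree_C_mul_le _ _).trans ((natDegree_sub_le _ _).trans (max_le hY hY'))
  let P : K[X] := L ^ 2 - Polynomial.C 4 * Y ^ 2 - R
  have hc : P.coeff (2 * N) ≠ 0 := by
    simp only [P, coeff_sub, coeff_C_mul]
    rw [coeff_pow_of_natDegree_le hL, coeff_pow_of_natDegree_le hY,
      coeff_eq_zero_of_natDegree_lt (lt_of_le_of_lt hR (show N < 2 * N by omega))]
    simp only [L, coeff_sub, coeff_add, coeff_C_mul]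
    rcases hcases with ⟨u, v⟩ | ⟨u, v⟩
    · rw [u, v]; 
      have : (x * 1 + x' * 0 - x' * 1) ^ 2 - 4 * 0 ^ 2 - 0 = (x - x')^2 := by ring
      rw [this]; exact pow_ne_zero _ h1
    · rw [u, v]
      have : (x * 0 + x' * 1 - x' * 0) ^ 2 - 4 * 1 ^ 2 - 0 = x'^2 - 4 := by ring
      rw [this]; exact h2
  have hP : P.natDegree ≤ 2 * (b.natAbs + d.natAbs) := by
    refine (natDegree_sub_le _ _).trans (max_le ((natDegree_sub_le _ _).trans (max_le ?_ ?_)) ?_)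
    · exact natDegree_pow_le.trans (by omega)
    · exact (natDegree_C_mul_le _ _).trans (natDegree_pow_le.trans (by omega))
    · omega
  refine le_trans (le_of_eq ?_) (card_roots_le P _ _ hP hc)
  congr 1
  ext t
  simp only [Finset.mem_filter, Finset.mem_univ, true_and, P, L, R, eval_sub, eval_add, eval_mul, eval_pow, eval_C]
  rw [← sub_eq_zero]
  ring_nf

lemma card_le_fib {α β : Type*} [DecidableEq β] (f : α → β) (s : Finset α) (t : Finset β) (n : ℕ)
    (Hf : ∀ a ∈ s, f a ∈ t) (hn : ∀ b ∈ t, (s.filter fun a => f a = b).card ≤ n) :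
    s.card ≤ n * t.card := Finset.card_le_mul_card_image_of_maps_to Hf n hn

lemma card_HF_aux (a b c d : ℤ) (ha : a ≠ 0) (hb : b ≠ 0) (hc : c ≠ 0) (hd : d ≠ 0) (hac : a ≠ c)
    (κ : K) :
    (Finset.univ.filter fun z : K × K => HH a b c d z.1 z.2 = κ * FF a b c d z.1 z.2).card
      ≤ 5 * (a.natAbs + b.natAbs + c.natAbs + d.natAbs) * Fintype.card K := by
  let B1 := Finset.univ.filter fun s : K => pC K (a + c) s - pC K (a - c) s = 0
  let B2 := Finset.univ.filter fun s : K => pC K (a - c) s ^ 2 - 4 = 0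
  let G := Finset.univ.filter fun z : K × K => HH a b c d z.1 z.2 = κ * FF a b c d z.1 z.2 ∧
    z.1 ∉ B1 ∧ z.1 ∉ B2
  have hB1 : B1.card ≤ _ := card_XX' a c ha hc
  have hB2 : B2.card ≤ _ := card_X'4 (a - c) (by omega)
  have hG : G.card ≤ (2 * (b.natAbs + d.natAbs)) * Fintype.card K := by
    refine card_le_fib Prod.fst G Finset.univ _ (by simp) ?_
    intro s _
    by_cases hs : s ∈ B1 ∨ s ∈ B2
    · rw [Finset.card_eq_zero.mpr]
      · omega
      · ext z
        simp only [G, Finset.mem_filter, Finset.mem_univ, true_and, Finset.notMem_empty, iff_false]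
        rintro ⟨⟨_, h⟩, rfl⟩
        tauto
    · push Not at hs
      refine le_trans ?_ (card_t_le b d hb hd (pC K (a + c) s) (pC K (a-c) s) κ
        (by simpa [B1] using hs.1) (by simpa [B2] using hs.2))
      apply Finset.card_le_card_of_injOn Prod.snd
      · rintro ⟨s', t⟩ h
        simp [G] at h
        obtain ⟨⟨h, _⟩, rfl⟩ := h
        simpa [HH, FF] using h
      · rintro ⟨s', t⟩ h ⟨s'', t'⟩ h' h3
        simp at h h' h3
        simp [h, h', h3]
  have hsub : (Finset.univ.filter fun z : K × K => HH a b c d z.1 z.2 = κ * FF a b c d z.1 z.2)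
      ⊆ G ∪ (B1 ×ˢ Finset.univ ∪ B2 ×ˢ Finset.univ) := by
    intro z hz
    simp only [Finset.mem_filter, Finset.mem_univ, true_and] at hz
    simp only [G, Finset.mem_union, Finset.mem_filter, Finset.mem_univ, true_and, Finset.mem_product, and_true, hz]
    tauto
  refine (Finset.card_le_card hsub).trans ((Finset.card_union_le _ _).trans 
    ((Nat.add_le_add_left (Finset.card_union_le _ _) _).trans ?_))
  rw [Finset.card_product, Finset.card_product, Finset.card_univ]
  have hac2 : (a-c).natAbs ≤ a.natAbs + c.natAbs := by omega
  have : B1.card + B2.card + 2 * (b.natAbs + d.natAbs) ≤ 5 * (a.natAbs + b.natAbs + c.natAbs + d.natAbs) := by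
    omega
  nlinarith [Nat.mul_le_mul_right (Fintype.card K) this]

lemma HH_swap (a b c d : ℤ) (s t : K) : HH a b c d s t = HH b a d c t s := by
  simp only [HH]; ring
lemma FF_swap (a b c d : ℤ) (s t : K) : FF a b c d s t = FF b a d c t s := by
  simp only [FF]; ring

lemma card_HF (a b c d : ℤ) (ha : a ≠ 0) (hb : b ≠ 0) (hc : c ≠ 0) (hd : d ≠ 0)
    (hne : ¬ (a = c ∧ b = d)) (κ : K) :
    (Finset.univ.filter fun z : K × K => HH a b c d z.1 z.2 = κ * FF a b c d z.1 z.2).card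
      ≤ 5 * (a.natAbs + b.natAbs + c.natAbs + d.natAbs) * Fintype.card K := by
  by_cases hac : a = c
  · have hbd : b ≠ d := by tauto
    refine le_trans ?_ ((card_HF_aux b a d c hb ha hd hc hbd κ).trans (le_of_eq (by ring)))
    apply Finset.card_le_card_of_injOn Prod.swap
    · intro z hz
      simpa [HH_swap a b c d, FF_swap a b c d] using hz
    · exact Prod.swap_injective.injOn
  · exact card_HF_aux a b c d ha hb hc hd hac κ

end

/-! ### Conics and the second moment -/

section
variable {K : Type} [Field K] [Fintype K] [DecidableEq K]

lemma conic_zero (A B C D E : K) (h : B * D * E - A * E^2 - C * D^2 ≠ 0) :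
    (Finset.univ.filter fun z : K × K =>
      A * z.1^2 + B * z.1 * z.2 + C * z.2^2 + D * z.1 + E * z.2 = 0).card ≤ Fintype.card K + 2 := by
  let S1 := Finset.univ.filter fun z : K × K =>
      A * z.1^2 + B * z.1 * z.2 + C * z.2^2 + D * z.1 + E * z.2 = 0 ∧ z.1 ≠ 0
  let S2 := Finset.univ.filter fun z : K × K =>
      A * z.1^2 + B * z.1 * z.2 + C * z.2^2 + D * z.1 + E * z.2 = 0 ∧ z.1 = 0
  have h1 : S1.card ≤ Fintype.card K := by
    rw [← Finset.card_univ (α := K)]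
    apply Finset.card_le_card_of_injOn (fun z => z.2 / z.1) (by simp)
    rintro ⟨x, y⟩ hz ⟨x', y'⟩ hz' he
    simp [S1] at hz hz' he
    obtain ⟨e, hx⟩ := hz
    obtain ⟨e', hx'⟩ := hz'
    obtain ⟨m, hm⟩ : ∃ m, m = y / x := ⟨_, rfl⟩
    have hy : y = m * x := by rw [hm]; field_simp
    have hy' : y' = m * x' := by rw [hm, he]; field_simp
    subst hy hy'
    have k1 : (A + B * m + C * m^2) * x + (D + E * m) = 0 := by
      apply mul_left_cancel₀ hx; linear_combination e
    have k2 : (A + B * m + C * m^2) * x' + (D + E * m) = 0 := by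
      apply mul_left_cancel₀ hx'; linear_combination e'
    have hQ : A + B * m + C * m^2 ≠ 0 := by
      intro hQ
      rw [hQ] at k1
      apply h
      have hD : D = - (E * m) := by linear_combination k1
      rw [hD]
      linear_combination - E^2 * hQ
    have : x = x' := by
      apply mul_left_cancel₀ hQ; linear_combination k1 - k2
    simp [this]
  have h2 : S2.card ≤ 2 := by
    have : S2.card ≤ (Finset.univ.filter fun z : K => C * z^2 + E * z + 0 = 0).card := by
      apply Finset.card_le_card_of_injOn Prod.snd
      · rintro ⟨x, y⟩ hz
        simp [S2] at hz
        obtain ⟨e, rfl⟩ := hz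
        simpa using e
      · rintro ⟨x, y⟩ hz ⟨x', y'⟩ hz' he
        simp [S2] at hz hz' he
        simp [hz, hz', he]
    refine this.trans ?_
    by_cases hC : C = 0
    · have hE : E ≠ 0 := by rintro rfl; apply h; rw [hC]; ring
      refine le_trans (b := 1) (Finset.card_le_one.mpr ?_) (by norm_num)
      intro x hx y hy
      simp [hC, hE] at hx hy
      rw [hx, hy]
    · exact card_quad_le C E 0 hC
  refine (Finset.card_le_card (t := S1 ∪ S2) ?_).trans ((Finset.card_union_le _ _).trans (by omega))
  intro z hz
  simp only [Finset.mem_filter, Finset.mem_univ, true_and] at hz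
  simp only [S1, S2, Finset.mem_union, Finset.mem_filter, Finset.mem_univ, true_and, hz]
  tauto

lemma conic (A B C D E F : K) (h : 4*A*C*F + B * D * E - A * E^2 - C * D^2 - F * B^2 ≠ 0) :
    (Finset.univ.filter fun z : K × K =>
      A * z.1^2 + B * z.1 * z.2 + C * z.2^2 + D * z.1 + E * z.2 + F = 0).card
        ≤ Fintype.card K + 2 := by
  rcases Finset.eq_empty_or_nonempty (Finset.univ.filter fun z : K × K =>
      A * z.1^2 + B * z.1 * z.2 + C * z.2^2 + D * z.1 + E * z.2 + F = 0) with h0 | ⟨⟨p, r⟩, hp⟩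
  · rw [h0]; simp
  · simp only [Finset.mem_filter, Finset.mem_univ, true_and] at hp
    have hF : F = -(A * p^2 + B * p * r + C * r^2 + D * p + E * r) := by linear_combination hp
    refine le_trans ?_ (conic_zero A B C (2 * A * p + B * r + D) (B * p + 2 * C * r + E) ?_)
    · apply Finset.card_le_card_of_injOn (fun z => (z.1 - p, z.2 - r))
      · rintro ⟨x, y⟩ hz
        simp at hz ⊢
        linear_combination hz - hp
      · rintro ⟨x, y⟩ hz ⟨x', y'⟩ hz' he
        simpa using he
    · intro h'
      apply h
      rw [hF]
      linear_combination h'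

noncomputable def phi (a b c d : ℤ) (z : (K × K) × K) : K :=
  f2 a b c d z.1.1 z.1.2 * z.2^2 + f1 a b c d z.1.1 z.1.2 * z.2 + f0 a b c d z.1.1 z.1.2

lemma f2_ne (a b c d : ℤ) (s t : K) (h : FF a b c d s t ≠ 0) : f2 a b c d s t ≠ 0 := by
  intro h'; apply h; rw [← f2_FF, h', mul_zero]

lemma second_moment (a b c d : ℤ) (ha : a ≠ 0) (hb : b ≠ 0) (hc : c ≠ 0) (hd : d ≠ 0)
    (hne : ¬ (a = c ∧ b = d)) :
    (Finset.univ.filter fun P : ((K × K) × K) × ((K × K) × K) =>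
      FF a b c d P.1.1.1 P.1.1.2 ≠ 0 ∧ FF a b c d P.2.1.1 P.2.1.2 ≠ 0 ∧
      phi a b c d P.1 = phi a b c d P.2).card ≤
    (Fintype.card K + 2) * Fintype.card K ^ 4 +
      10 * (a.natAbs + b.natAbs + c.natAbs + d.natAbs) * Fintype.card K ^ 4 := by
  set q := Fintype.card K with hq
  set n := a.natAbs + b.natAbs + c.natAbs + d.natAbs with hn
  let det : (K × K) → (K × K) → K := fun z z' =>
    HH a b c d z.1 z.2 * FF a b c d z'.1 z'.2 - HH a b c d z'.1 z'.2 * FF a b c d z.1 z.2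
  let S := Finset.univ.filter fun P : ((K × K) × K) × ((K × K) × K) =>
      FF a b c d P.1.1.1 P.1.1.2 ≠ 0 ∧ FF a b c d P.2.1.1 P.2.1.2 ≠ 0 ∧
      phi a b c d P.1 = phi a b c d P.2
  let S1 := S.filter fun P => det P.1.1 P.2.1 ≠ 0
  let S2 := S.filter fun P => ¬ det P.1.1 P.2.1 ≠ 0
  have hS : S.card = S1.card + S2.card := (Finset.card_filter_add_card_filter_not _).symm
  have h1 : S1.card ≤ (q + 2) * q ^ 4 := by
    have hcard : (Finset.univ : Finset ((K × K) × (K × K))).card = q ^ 4 := by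
      rw [Finset.card_univ]; simp only [Fintype.card_prod, ← hq]; ring
    rw [← hcard]
    refine card_le_fib (fun P => (P.1.1, P.2.1)) S1 Finset.univ _ (by simp) ?_
    rintro ⟨⟨s, t⟩, ⟨s', t'⟩⟩ _
    by_cases hdet : det (s, t) (s', t') ≠ 0
    · refine le_trans ?_ (conic (f2 a b c d s t) 0 (-f2 a b c d s' t') (f1 a b c d s t)
        (-f1 a b c d s' t') (f0 a b c d s t - f0 a b c d s' t') ?_)
      · apply Finset.card_le_card_of_injOn (fun P => (P.1.2, P.2.2))
        · rintro ⟨⟨⟨x, y⟩, u⟩, ⟨⟨x', y'⟩, u'⟩⟩ h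
          simp [S1, S] at h
          obtain ⟨⟨⟨_, _, h⟩, _⟩, ⟨rfl, rfl⟩, ⟨rfl, rfl⟩⟩ := h
          simp only [phi] at h
          simp
          linear_combination h
        · rintro ⟨⟨⟨x, y⟩, u⟩, ⟨⟨x', y'⟩, u'⟩⟩ h ⟨⟨⟨x2, y2⟩, u2⟩, ⟨⟨x2', y2'⟩, u2'⟩⟩ h2 he
          simp at h h2 he
          simp [h, h2, he]
      · intro h0
        apply hdet
        simp only [det]
        rw [← f2_FF, ← f2_FF, ← disc_HH, ← disc_HH]
        linear_combination (s^2-4)*(t^2-4)*(s'^2-4)*(t'^2-4) * h0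
    · rw [Finset.card_eq_zero.mpr]
      · omega
      · ext ⟨P, P'⟩
        simp only [S1, Finset.mem_filter, Finset.notMem_empty, iff_false, Prod.mk.injEq]
        rintro ⟨⟨_, h⟩, h', h''⟩
        rw [h', h''] at h
        exact hdet h
  have h2 : S2.card ≤ (2 * q) * ((5 * n * q) * q ^ 2) := by
    let B := Finset.univ.filter fun Z : (K × K) × (K × K) =>
      FF a b c d Z.2.1 Z.2.2 ≠ 0 ∧ det Z.1 Z.2 = 0
    have hB : B.card ≤ (5 * n * q) * q ^ 2 := by
      have hcard : (Finset.univ : Finset (K × K)).card = q ^ 2 := by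
        rw [Finset.card_univ]; simp only [Fintype.card_prod, ← hq]; ring
      rw [← hcard]
      refine card_le_fib (fun P => P.2) B Finset.univ _ (by simp) ?_
      rintro ⟨s', t'⟩ _
      refine le_trans ?_ (card_HF a b c d ha hb hc hd hne (HH a b c d s' t' / FF a b c d s' t'))
      apply Finset.card_le_card_of_injOn Prod.fst
      · rintro ⟨⟨x, y⟩, ⟨x', y'⟩⟩ h
        simp [B, det] at h
        obtain ⟨⟨h1, h2⟩, rfl, rfl⟩ := h
        simp
        field_simp
        linear_combination h2
      · rintro ⟨⟨x, y⟩, ⟨x', y'⟩⟩ h ⟨⟨x2, y2⟩, ⟨x2', y2'⟩⟩ h2 he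
        simp at h h2 he
        simp [h, h2, he]
    refine le_trans (card_le_fib (fun P => (P.1.1, P.2.1)) S2 B (2 * q) ?_ ?_)
      (Nat.mul_le_mul_left _ hB)
    · intro P hP
      simp [S2, S] at hP
      simp [B, hP]
    · rintro ⟨⟨s, t⟩, ⟨s', t'⟩⟩ _
      rw [hq, ← Finset.card_univ (α := K)]
      refine card_le_fib (fun P => P.2.2) _ Finset.univ _ (by simp) ?_
      intro u' _
      by_cases hF : FF a b c d s t = 0
      · rw [Finset.card_eq_zero.mpr]
        · omega
        · ext ⟨P, P'⟩
          simp only [S2, S, Finset.mem_filter, Finset.notMem_empty, iff_false, Prod.mk.injEq]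
          rintro ⟨⟨⟨⟨_, h, _⟩, _⟩, h', h''⟩, _⟩
          rw [h'] at h
          exact h hF
      · refine le_trans ?_ (card_quad_le (f2 a b c d s t) (f1 a b c d s t)
          (f0 a b c d s t - phi a b c d ((s', t'), u')) (f2_ne a b c d s t hF))
        apply Finset.card_le_card_of_injOn (fun P => P.1.2)
        · rintro ⟨⟨⟨x, y⟩, u⟩, ⟨⟨x', y'⟩, u'⟩⟩ h
          simp [S2, S] at h
          obtain ⟨⟨⟨⟨_, _, h⟩, _⟩, ⟨rfl, rfl⟩, ⟨rfl, rfl⟩⟩, rfl⟩ := h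
          simp
          rw [← h]
          simp [phi]
        · rintro ⟨⟨⟨x, y⟩, u⟩, ⟨⟨x', y'⟩, u'⟩⟩ h ⟨⟨⟨x2, y2⟩, u2⟩, ⟨⟨x2', y2'⟩, u2'⟩⟩ h2 he
          simp at h h2 he
          simp [h, h2, he]
  change S.card ≤ _
  rw [hS]
  have : (2 * q) * ((5 * n * q) * q ^ 2) = 10 * n * q ^ 4 := by ring
  omega
end

/-! ### Counting in SL2 -/

section
variable {K : Type} [Field K] [Fintype K] [DecidableEq K]

lemma sl2_det (x : SL2 K) : x.1 0 0 * x.1 1 1 - x.1 0 1 * x.1 1 0 = 1 := by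
  have := x.det_coe
  rwa [Matrix.det_fin_two] at this

lemma sl2_ext (x y : SL2 K) (h1 : x.1 0 0 = y.1 0 0) (h2 : x.1 0 1 = y.1 0 1)
    (h3 : x.1 1 0 = y.1 1 0) (h4 : x.1 1 1 = y.1 1 1) : x = y := by
  apply Subtype.ext
  ext i j
  fin_cases i <;> fin_cases j <;> assumption

lemma card_tr_le (s : K) : (Finset.univ.filter fun x : SL2 K => trS x = s).card
    ≤ Fintype.card K ^ 2 + 2 * Fintype.card K := by
  let S := Finset.univ.filter fun x : SL2 K => trS x = s
  have hS : S.card = _ := (Finset.card_filter_add_card_filter_not (s := S) (fun x : SL2 K => x.1 0 1 ≠ 0)).symm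
  have h1 : (S.filter fun x : SL2 K => x.1 0 1 ≠ 0).card ≤ Fintype.card K ^ 2 := by
    have : (Finset.univ : Finset (K × K)).card = Fintype.card K ^ 2 := by
      rw [Finset.card_univ, Fintype.card_prod]; ring
    rw [← this]
    apply Finset.card_le_card_of_injOn (fun x => (x.1 0 0, x.1 0 1)) (by simp)
    intro x hx y hy he
    simp only [S, Finset.coe_filter, Finset.mem_filter, Finset.mem_univ, true_and, Set.mem_ofPred_eq, Prod.mk.injEq] at hx hy he
    simp only [trS] at hx hy
    obtain ⟨e1, e2⟩ := he
    have hx' := sl2_det x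
    have hy' := sl2_det y
    have h4 : x.1 1 1 = y.1 1 1 := by linear_combination hx.1 - hy.1 - e1
    refine sl2_ext x y e1 e2 ?_ h4
    apply mul_left_cancel₀ hx.2
    rw [← e1, ← e2, ← h4] at hy'
    linear_combination hy' - hx'
  have h2 : (S.filter fun x : SL2 K => ¬ x.1 0 1 ≠ 0).card ≤ 2 * Fintype.card K := by
    let R := Finset.univ.filter fun z : K => 1 * z^2 + (-s) * z + 1 = 0
    have hR : R.card ≤ 2 := card_quad_le 1 (-s) 1 one_ne_zero
    have : (R ×ˢ (Finset.univ : Finset K)).card ≤ 2 * Fintype.card K := by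
      rw [Finset.card_product, Finset.card_univ]
      exact Nat.mul_le_mul_right _ hR
    refine le_trans ?_ this
    apply Finset.card_le_card_of_injOn (fun x => (x.1 0 0, x.1 1 0))
    · intro x hx
      simp only [S, Finset.coe_filter, Finset.mem_filter, Finset.mem_univ, true_and, Set.mem_ofPred_eq, not_not] at hx
      simp only [trS] at hx
      have := sl2_det x
      simp [R]
      rw [hx.2] at this
      linear_combination x.1 0 0 * hx.1 - this
    · intro x hx y hy he
      simp only [S, Finset.coe_filter, Finset.mem_filter, Finset.mem_univ, true_and, Set.mem_ofPred_eq, Prod.mk.injEq, not_not] at hx hy he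
      simp only [trS] at hx hy
      exact sl2_ext x y he.1 (by rw [hx.2, hy.2]) he.2 (by linear_combination hx.1 - hy.1 - he.1)
  change S.card ≤ _
  omega

def mkSL (s z : K) (r : Kˣ) : SL2 K :=
  ⟨!![z, r; (z * (s - z) - 1) * (r⁻¹ : Kˣ), s - z], by
    rw [Matrix.det_fin_two]
    simp
    have : (r : K) * (r : K)⁻¹ = 1 := by simp
    linear_combination -(z * (s - z) - 1) * this⟩

lemma card_tr_ge (s : K) : Fintype.card K ^ 2 ≤ 
    (Finset.univ.filter fun x : SL2 K => trS x = s).card + Fintype.card K := by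
  have h : (Finset.univ : Finset (K × Kˣ)).card ≤ (Finset.univ.filter fun x : SL2 K => trS x = s).card := by
    apply Finset.card_le_card_of_injOn (fun z => mkSL s z.1 z.2)
    · intro z _
      simp only [Finset.coe_filter, Finset.mem_univ, true_and, Set.mem_ofPred_eq]
      simp [trS, mkSL]
    · rintro ⟨z, r⟩ _ ⟨z', r'⟩ _ he
      have h0 := congrArg (fun x : SL2 K => x.1 0 0) he
      have h1 := congrArg (fun x : SL2 K => x.1 0 1) he
      simp [mkSL] at h0 h1
      rw [h0, Units.ext h1]
  rw [Finset.card_univ, Fintype.card_prod, Fintype.card_units] at h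
  have : 1 ≤ Fintype.card K := Fintype.card_pos
  obtain ⟨k, hk⟩ := Nat.exists_eq_add_of_le this
  rw [hk] at h ⊢
  have : 1 + k - 1 = k := by omega
  rw [this] at h
  nlinarith

lemma card_SL_le : Fintype.card (SL2 K) ≤ (Fintype.card K ^ 2 + 2 * Fintype.card K) * Fintype.card K := by
  rw [← Finset.card_univ (α := SL2 K), ← Finset.card_univ (α := K)]
  refine card_le_fib trS Finset.univ Finset.univ _ (by simp) ?_
  intro s _
  rw [Finset.card_univ]
  exact card_tr_le s

lemma card_SL_ge : Fintype.card K ^ 3 ≤ Fintype.card (SL2 K) + Fintype.card K ^ 2 := by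
  rw [← Finset.card_univ (α := SL2 K), Finset.card_eq_sum_card_fiberwise (f := trS) (t := Finset.univ) (by simp)]
  have : ∑ s : K, Fintype.card K ^ 2 ≤ ∑ s : K, ((Finset.univ.filter fun x : SL2 K => trS x = s).card + Fintype.card K) :=
    Finset.sum_le_sum fun s _ => card_tr_ge s
  rw [Finset.sum_add_distrib] at this
  simp only [Finset.sum_const, Finset.card_univ, smul_eq_mul] at this
  nlinarith

lemma card_x01 : (Finset.univ.filter fun x : SL2 K => x.1 0 1 = 0).card ≤ Fintype.card K ^ 2 := by
  have : (Finset.univ : Finset (K × K)).card = Fintype.card K ^ 2 := by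
    rw [Finset.card_univ, Fintype.card_prod]; ring
  rw [← this]
  apply Finset.card_le_card_of_injOn (fun x => (x.1 0 0, x.1 1 0)) (by simp)
  intro x hx y hy he
  simp at hx hy he
  have h1 := sl2_det x
  have h2 := sl2_det y
  rw [hx] at h1
  rw [hy] at h2
  refine sl2_ext x y he.1 (by rw [hx, hy]) he.2 ?_
  have h0 : x.1 0 0 ≠ 0 := by intro h; rw [h] at h1; simp at h1
  apply mul_left_cancel₀ h0
  rw [← he.1] at h2
  linear_combination h1 - h2

def Delta (s t u : K) : K := s^2 + t^2 + u^2 - s*t*u - 4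

def Good (a b c d : ℤ) (P : SL2 K × SL2 K) : Prop :=
  P.1.1 0 1 ≠ 0 ∧ FF a b c d (trS P.1) (trS P.2) ≠ 0 ∧ Delta (trS P.1) (trS P.2) (trU P.1 P.2) ≠ 0

noncomputable instance (a b c d : ℤ) : DecidablePred (Good (K := K) a b c d) := Classical.decPred _

def trip (P : SL2 K × SL2 K) : (K × K) × K := ((trS P.1, trS P.2), trU P.1 P.2)

lemma y_det_aux (x y : SL2 K) (h : x.1 0 1 ≠ 0) (y' : SL2 K) (ht : trS y = trS y')
    (hu : trU x y = trU x y') (h0 : y.1 0 0 = y'.1 0 0) (h1 : y.1 0 1 = y'.1 0 1) : y = y' := by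
  simp only [trS, trU] at ht hu
  have h3 : y.1 1 1 = y'.1 1 1 := by linear_combination ht - h0
  refine sl2_ext y y' h0 h1 ?_ h3
  apply mul_left_cancel₀ h
  linear_combination hu - x.1 0 0 * h0 - x.1 1 0 * h1 - x.1 1 1 * h3

lemma y_conic_eq (x y : SL2 K) : (-x.1 0 1) * y.1 0 0 ^ 2 + (x.1 0 0 - x.1 1 1) * y.1 0 0 * y.1 0 1
    + x.1 1 0 * y.1 0 1 ^ 2 + x.1 0 1 * trS y * y.1 0 0 + (- (trU x y - x.1 1 1 * trS y)) * y.1 0 1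
    + (- x.1 0 1) = 0 := by
  have := sl2_det y
  simp only [trS, trU]
  linear_combination x.1 0 1 * this

lemma fibre_le (a b c d : ℤ) (z : (K × K) × K) :
    (Finset.univ.filter fun P : SL2 K × SL2 K => Good a b c d P ∧ trip P = z).card
      ≤ (Fintype.card K + 2) * (Fintype.card K ^ 2 + 2 * Fintype.card K) := by
  obtain ⟨⟨s, t⟩, u⟩ := z
  refine le_trans (card_le_fib Prod.fst _ (Finset.univ.filter fun x : SL2 K => trS x = s)
    (Fintype.card K + 2) ?_ ?_) (Nat.mul_le_mul_left _ (card_tr_le s))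
  · rintro ⟨x, y⟩ h
    simp [trip] at h
    simp [h]
  · intro x hx
    simp at hx
    by_cases hx0 : x.1 0 1 = 0 ∨ Delta s t u = 0
    · rw [Finset.card_eq_zero.mpr]
      · omega
      · ext ⟨x', y⟩
        simp only [Finset.mem_filter, Finset.mem_univ, true_and, Finset.notMem_empty, iff_false, trip, Prod.mk.injEq, Good]
        rintro ⟨⟨⟨h1, _, h2⟩, ⟨rfl, rfl⟩, rfl⟩, rfl⟩
        tauto
    push Not at hx0
    refine le_trans ?_ (conic (-x.1 0 1) (x.1 0 0 - x.1 1 1) (x.1 1 0) (x.1 0 1 * t)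
      (-(u - x.1 1 1 * t)) (-x.1 0 1) ?_)
    · apply Finset.card_le_card_of_injOn (fun P => (P.2.1 0 0, P.2.1 0 1))
      · rintro ⟨x', y⟩ h
        simp only [Finset.coe_filter, Finset.mem_filter, Finset.mem_univ, true_and, Set.mem_ofPred_eq, trip, Prod.mk.injEq] at h
        obtain ⟨⟨_, ⟨h1, h2⟩, h3⟩, rfl⟩ := h
        simp only [Finset.coe_filter, Finset.mem_univ, true_and, Set.mem_ofPred_eq]
        rw [← h2, ← h3]
        exact y_conic_eq x' y
      · rintro ⟨x', y⟩ h ⟨x'', y'⟩ h' he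
        simp only [Finset.coe_filter, Finset.mem_filter, Finset.mem_univ, true_and, Set.mem_ofPred_eq, trip, Prod.mk.injEq] at h h' he
        obtain ⟨⟨_, ⟨h1, h2⟩, h3⟩, rfl⟩ := h
        obtain ⟨⟨_, ⟨h1', h2'⟩, h3'⟩, rfl⟩ := h'
        rw [y_det_aux x'' y hx0.1 y' (by rw [h2, h2']) (by rw [h3, h3']) he.1 he.2]
    · have hs : x.1 0 0 = s - x.1 1 1 := by rw [← hx, trS]; ring
      have hd := sl2_det x
      intro h0
      apply mul_ne_zero hx0.1 hx0.2
      rw [hs] at h0 hd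
      simp only [Delta]
      linear_combination h0 + (4 - t^2) * x.1 0 1 * hd 

lemma bad_le (a b c d : ℤ) (ha : a ≠ 0) (hb : b ≠ 0) (hc : c ≠ 0) (hd : d ≠ 0) :
    (Finset.univ.filter fun P : SL2 K × SL2 K => ¬ Good a b c d P).card
      ≤ (5 * Fintype.card K ^ 2 + (a.natAbs + b.natAbs + c.natAbs + d.natAbs) *
        (Fintype.card K ^ 2 + 2 * Fintype.card K)) * Fintype.card (SL2 K) := by
  set q := Fintype.card K with hq
  let X1 := Finset.univ.filter fun x : SL2 K => x.1 0 1 = 0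
  have hX1 : X1.card ≤ q ^ 2 := card_x01
  let X2 := Finset.univ.filter fun x : SL2 K => pC K (a + c) (trS x) - pC K (a - c) (trS x) = 0
  have hX2 : X2.card ≤ (q^2 + 2 * q) * (a.natAbs + c.natAbs) := by
    refine le_trans (card_le_fib trS _ _ (q^2+2*q) ?_ ?_) (Nat.mul_le_mul_left _ (card_XX' (K := K) a c ha hc))
    · intro x hx; simpa [X2] using hx
    · intro s _
      refine le_trans (Finset.card_le_card ?_) (card_tr_le s)
      apply Finset.filter_subset_filter
      simp
  let X3 := Finset.univ.filter fun x : SL2 K => pC K (b + d) (trS x) - pC K (b - d) (trS x) = 0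
  have hX3 : X3.card ≤ (q^2 + 2 * q) * (b.natAbs + d.natAbs) := by
    refine le_trans (card_le_fib trS _ _ (q^2+2*q) ?_ ?_) (Nat.mul_le_mul_left _ (card_XX' (K := K) b d hb hd))
    · intro x hx; simpa [X3] using hx
    · intro s _
      refine le_trans (Finset.card_le_card ?_) (card_tr_le s)
      apply Finset.filter_subset_filter
      simp
  let S := Finset.univ.filter fun P : SL2 K × SL2 K => P.1.1 0 1 ≠ 0 ∧
    Delta (trS P.1) (trS P.2) (trU P.1 P.2) = 0
  have hS : S.card ≤ (((2 * q) * 2) * q) * Fintype.card (SL2 K) := by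
    rw [← Finset.card_univ (α := SL2 K)]
    refine card_le_fib Prod.fst S Finset.univ _ (by simp) ?_
    intro x _
    nth_rewrite 2 [hq]
    rw [← Finset.card_univ (α := K)]
    refine card_le_fib (fun P => trS P.2) _ Finset.univ _ (by simp) ?_
    intro t _
    refine le_trans (card_le_fib (fun P => trU P.1 P.2) _ 
      (Finset.univ.filter fun u : K => 1 * u^2 + (- (trS x * t)) * u + (trS x ^2 + t^2 - 4) = 0) (2 * q) ?_ ?_)
      (Nat.mul_le_mul_left _ (card_quad_le _ _ _ one_ne_zero))
    · rintro ⟨x', y⟩ h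
      simp only [S, Finset.mem_filter, Finset.mem_univ, true_and] at h ⊢
      simp only [Delta] at h
      obtain ⟨⟨⟨_, h⟩, rfl⟩, rfl⟩ := h
      linear_combination h
    · intro u _
      rw [hq, ← Finset.card_univ (α := K)]
      refine card_le_fib (fun P => P.2.1 0 1) _ Finset.univ _ (by simp) ?_
      intro r _
      by_cases hx : x.1 0 1 = 0
      · rw [Finset.card_eq_zero.mpr]
        · omega
        · ext ⟨x', y⟩
          simp only [S, Finset.mem_filter, Finset.mem_univ, true_and, Finset.notMem_empty, iff_false]
          rintro ⟨⟨⟨⟨⟨h1, _⟩, rfl⟩, _⟩, _⟩, _⟩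
          exact h1 hx
      · refine le_trans ?_ (card_quad_le (-x.1 0 1) ((x.1 0 0 - x.1 1 1) * r + x.1 0 1 * t)
          (x.1 1 0 * r ^ 2 + (- (u - x.1 1 1 * t)) * r + (- x.1 0 1)) (neg_ne_zero.mpr hx))
        apply Finset.card_le_card_of_injOn (fun P => P.2.1 0 0)
        · rintro ⟨x', y⟩ h
          simp only [S, Finset.coe_filter, Finset.mem_filter, Finset.mem_univ, true_and, Set.mem_ofPred_eq] at h ⊢
          obtain ⟨⟨⟨⟨⟨h1, _⟩, rfl⟩, rfl⟩, rfl⟩, rfl⟩ := h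
          linear_combination y_conic_eq x' y
        · rintro ⟨x', y⟩ h ⟨x'', y'⟩ h' he
          simp only [S, Finset.coe_filter, Finset.mem_filter, Finset.mem_univ, true_and, Set.mem_ofPred_eq] at h h' he
          obtain ⟨⟨⟨⟨⟨h1, _⟩, rfl⟩, h2⟩, h3⟩, h4⟩ := h
          obtain ⟨⟨⟨⟨⟨h1', _⟩, rfl⟩, h2'⟩, h3'⟩, h4'⟩ := h'
          rw [y_det_aux x'' y h1 y' (by rw [h2, h2']) (by rw [h3, h3']) he (by rw [h4, h4'])]
  have hsub : (Finset.univ.filter fun P : SL2 K × SL2 K => ¬ Good a b c d P) ⊆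
      (S ∪ X1 ×ˢ Finset.univ) ∪ (X2 ×ˢ Finset.univ ∪ Finset.univ ×ˢ X3) := by
    rintro ⟨x, y⟩ h
    simp only [Finset.mem_filter, Finset.mem_univ, true_and, Good, FF, mul_ne_zero_iff] at h
    simp only [S, X1, X2, X3, Finset.mem_union, Finset.mem_product, Finset.mem_filter, Finset.mem_univ, true_and, and_true]
    tauto
  refine (Finset.card_le_card hsub).trans ((Finset.card_union_le _ _).trans ?_)
  refine (Nat.add_le_add (Finset.card_union_le _ _) (Finset.card_union_le _ _)).trans ?_
  simp only [Finset.card_product, Finset.card_univ]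
  have e1 := Nat.mul_le_mul_right (Fintype.card (SL2 K)) hX1
  have e2 := Nat.mul_le_mul_right (Fintype.card (SL2 K)) hX2
  have e3 := Nat.mul_le_mul_right (Fintype.card (SL2 K)) hX3
  nlinarith
end

/-! ### Fibres are constant on trace classes -/

section
variable {K : Type} [Field K] [Fintype K] [DecidableEq K]

lemma word_eq (a b c d : ℤ) (x y : SL2 K) :
    wordMap (theWord a b c d) K (x, y) = x ^ a * y ^ b * x ^ c * y ^ d := by
  simp [wordMap, wordEval, theWord]

noncomputable def NN (a b c d : ℤ) (g : SL2 K) : ℕ :=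
  (Finset.univ.filter fun P : SL2 K × SL2 K => wordMap (theWord a b c d) K P = g).card

lemma NN_map (a b c d : ℤ) (φ : SL2 K ≃* SL2 K) (g : SL2 K) :
    NN a b c d (φ g) = NN a b c d g := by
  have key : ∀ (φ : SL2 K ≃* SL2 K) (g : SL2 K), NN a b c d g ≤ NN a b c d (φ g) := by
    intro φ g
    apply Finset.card_le_card_of_injOn (fun P => (φ P.1, φ P.2))
    · rintro ⟨x, y⟩ h
      simp only [Finset.coe_filter, Finset.mem_univ, true_and, Set.mem_ofPred_eq] at h ⊢
      rw [← h, word_eq, word_eq]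
      simp only [map_mul, map_zpow]
    · rintro ⟨x, y⟩ _ ⟨x', y'⟩ _ h
      simpa using h
  apply le_antisymm _ (key φ g)
  have := key φ.symm (φ g)
  simpa using this

lemma sl2_mul_apply (x y : SL2 K) (i j : Fin 2) :
    (x * y).1 i j = x.1 i 0 * y.1 0 j + x.1 i 1 * y.1 1 j := by
  change ((x * y : SL2 K) : Matrix (Fin 2) (Fin 2) K) i j = _
  rw [Matrix.SpecialLinearGroup.coe_mul, Matrix.mul_apply, Fin.sum_univ_two]

def dFun (r : Kˣ) (x : SL2 K) : SL2 K :=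
  ⟨!![x.1 0 0, r * x.1 0 1; (r⁻¹ : Kˣ) * x.1 1 0, x.1 1 1], by
    rw [Matrix.det_fin_two]
    have := sl2_det x
    have h : (r : K) * ((r⁻¹ : Kˣ) : K) = 1 := by simp
    simp only [Matrix.of_apply, Matrix.cons_val_zero, Matrix.cons_val_one, Matrix.cons_val', Matrix.cons_val_fin_one]
    linear_combination this - x.1 0 1 * x.1 1 0 * h⟩

lemma dFun00 (r : Kˣ) (x : SL2 K) : (dFun r x).1 0 0 = x.1 0 0 := rfl
lemma dFun01 (r : Kˣ) (x : SL2 K) : (dFun r x).1 0 1 = r * x.1 0 1 := rfl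
lemma dFun10 (r : Kˣ) (x : SL2 K) : (dFun r x).1 1 0 = (r⁻¹ : Kˣ) * x.1 1 0 := rfl
lemma dFun11 (r : Kˣ) (x : SL2 K) : (dFun r x).1 1 1 = x.1 1 1 := rfl

def dAut (r : Kˣ) : SL2 K ≃* SL2 K where
  toFun := dFun r
  invFun := dFun r⁻¹
  left_inv x := by apply sl2_ext <;> simp [dFun]
  right_inv x := by apply sl2_ext <;> simp [dFun]
  map_mul' x y := by
    have h : (r : K) * ((r⁻¹ : Kˣ) : K) = 1 := by simp
    apply sl2_ext <;> simp only [sl2_mul_apply, dFun00, dFun01, dFun10, dFun11]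
    · linear_combination -x.1 0 1 * y.1 1 0 * h
    · ring
    · ring
    · linear_combination -x.1 1 0 * y.1 0 1 * h

def eL (k : K) : SL2 K := ⟨!![1, 0; k, 1], by simp [Matrix.det_fin_two]⟩
def eW : SL2 K := ⟨!![0, 1; -1, 0], by simp [Matrix.det_fin_two]⟩
def eU : SL2 K := ⟨!![1, 1; 0, 1], by simp [Matrix.det_fin_two]⟩

lemma trS_conj (h g : SL2 K) : trS (MulAut.conj h g) = trS g := by
  have e : ∀ x : SL2 K, trS x = Matrix.trace x.1 := fun x => by rw [Matrix.trace_fin_two]; rfl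
  rw [e, e, MulAut.conj_apply, Matrix.SpecialLinearGroup.coe_mul, Matrix.trace_mul_comm,
    ← Matrix.SpecialLinearGroup.coe_mul, inv_mul_cancel_left]

lemma canon1 (g : SL2 K) (h : g.1 0 1 ≠ 0) : ∃ φ : SL2 K ≃* SL2 K, φ g = mkSL (trS g) 0 1 := by
  let r : Kˣ := (Units.mk0 _ h)⁻¹
  have hr : (r : K) * g.1 0 1 = 1 := by simp [r, h]
  have hr' : ((r⁻¹ : Kˣ) : K) = g.1 0 1 := by simp [r]
  refine ⟨(dAut r).trans (MulAut.conj (eL (g.1 0 0))), ?_⟩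
  have hd := sl2_det g
  change eL (g.1 0 0) * dFun r g * (eL (g.1 0 0))⁻¹ = _
  rw [mul_inv_eq_iff_eq_mul]
  have e1 : (eL (g.1 0 0)).1 0 0 = 1 := rfl
  have e2 : (eL (g.1 0 0)).1 0 1 = 0 := rfl
  have e3 : (eL (g.1 0 0)).1 1 0 = g.1 0 0 := rfl
  have e4 : (eL (g.1 0 0)).1 1 1 = 1 := rfl
  have m1 : (mkSL (trS g) 0 1).1 0 0 = 0 := rfl
  have m2 : (mkSL (trS g) 0 1).1 0 1 = 1 := rfl
  have m3 : (mkSL (trS g) 0 1).1 1 0 = -1 := by simp [mkSL]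
  have m4 : (mkSL (trS g) 0 1).1 1 1 = g.1 0 0 + g.1 1 1 := by simp [mkSL, trS]
  apply sl2_ext <;> simp only [sl2_mul_apply, dFun00, dFun01, dFun10, dFun11, hr, hr', e1, e2, e3, e4,
    m1, m2, m3, m4]
  · ring
  · ring
  · linear_combination -hd
  · ring

lemma canon (g : SL2 K) (h : trS g ^ 2 ≠ 4) : ∃ φ : SL2 K ≃* SL2 K, φ g = mkSL (trS g) 0 1 := by
  by_cases h1 : g.1 0 1 = 0
  · have key : ∀ k : SL2 K, (MulAut.conj k g).1 0 1 ≠ 0 → ∃ φ : SL2 K ≃* SL2 K, φ g = mkSL (trS g) 0 1 := by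
      intro k hk
      obtain ⟨φ, hφ⟩ := canon1 (MulAut.conj k g) hk
      rw [trS_conj] at hφ
      exact ⟨(MulAut.conj k).trans φ, hφ⟩
    by_cases h2 : g.1 1 0 = 0
    · apply key eU
      have hd := sl2_det g
      intro h3
      have hG : MulAut.conj eU g * eU = eU * g := by simp [MulAut.conj_apply]
      have q1 := congrArg (fun x : SL2 K => x.1 0 0) hG
      have q2 := congrArg (fun x : SL2 K => x.1 0 1) hG
      have u1 : (eU : SL2 K).1 0 0 = 1 := rfl
      have u2 : (eU : SL2 K).1 0 1 = 1 := rfl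
      have u3 : (eU : SL2 K).1 1 0 = 0 := rfl
      have u4 : (eU : SL2 K).1 1 1 = 1 := rfl
      simp only [sl2_mul_apply, u1, u2, u3, u4, h3, h1, h2] at q1 q2
      have h4 : g.1 0 0 - g.1 1 1 = 0 := by linear_combination q2 - q1
      apply h
      rw [h1] at hd
      simp only [trS]
      linear_combination (g.1 0 0 - g.1 1 1) * h4 + 4 * hd
    · apply key eW
      intro h3
      have hG : MulAut.conj eW g * eW = eW * g := by simp [MulAut.conj_apply]
      have q1 := congrArg (fun x : SL2 K => x.1 0 0) hG
      have u1 : (eW : SL2 K).1 0 0 = 0 := rfl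
      have u2 : (eW : SL2 K).1 0 1 = 1 := rfl
      have u3 : (eW : SL2 K).1 1 0 = -1 := rfl
      simp only [sl2_mul_apply, u1, u2, u3, h3] at q1
      apply h2
      linear_combination -q1
  · exact canon1 g h1

lemma NN_const (a b c d : ℤ) (g : SL2 K) (h : trS g ^ 2 ≠ 4) :
    NN a b c d g = NN a b c d (mkSL (trS g) 0 1) := by
  obtain ⟨φ, hφ⟩ := canon g h
  rw [← hφ, NN_map]

noncomputable def MM (a b c d : ℤ) (τ : K) : ℕ :=
  (Finset.univ.filter fun P : SL2 K × SL2 K => trS (wordMap (theWord a b c d) K P) = τ).card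

lemma MM_eq (a b c d : ℤ) (g : SL2 K) (h : trS g ^ 2 ≠ 4) :
    MM a b c d (trS g) = (Finset.univ.filter fun x : SL2 K => trS x = trS g).card * NN a b c d g := by
  unfold MM
  rw [Finset.card_eq_sum_card_fiberwise (f := fun P => wordMap (theWord a b c d) K P)
    (t := Finset.univ.filter fun x : SL2 K => trS x = trS g) (by intro P hP; simpa using hP)]
  rw [Finset.sum_const_nat]
  intro x hx
  simp only [Finset.mem_filter, Finset.mem_univ, true_and] at hx
  rw [NN_const a b c d g h, ← hx, ← NN_const a b c d x (by rwa [hx]), NN, Finset.filter_filter]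
  congr 1
  ext P
  simp only [Finset.mem_filter, Finset.mem_univ, true_and]
  constructor
  · exact fun h => h.2
  · rintro rfl; exact ⟨rfl, rfl⟩

/-- number of good pairs with given trace -/
noncomputable def MS (a b c d : ℤ) (τ : K) : ℕ :=
  (Finset.univ.filter fun P : SL2 K × SL2 K =>
    Good a b c d P ∧ trS (wordMap (theWord a b c d) K P) = τ).card
noncomputable def MB (a b c d : ℤ) (τ : K) : ℕ :=
  (Finset.univ.filter fun P : SL2 K × SL2 K =>
    ¬ Good a b c d P ∧ trS (wordMap (theWord a b c d) K P) = τ).card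

lemma MM_split (a b c d : ℤ) (τ : K) : MM a b c d τ = MS a b c d τ + MB a b c d τ := by
  unfold MM MS MB
  rw [← Finset.card_filter_add_card_filter_not (Good a b c d)]
  simp only [Finset.filter_filter, and_comm]

lemma sum_MB (a b c d : ℤ) : ∑ τ : K, MB a b c d τ = 
    (Finset.univ.filter fun P : SL2 K × SL2 K => ¬ Good a b c d P).card := by
  rw [Finset.card_eq_sum_card_fiberwise (f := fun P => trS (wordMap (theWord a b c d) K P))
    (t := Finset.univ) (by simp)]
  simp only [MB, Finset.filter_filter]

lemma sum_MM (a b c d : ℤ) : ∑ τ : K, MM a b c d τ = Fintype.card (SL2 K) ^ 2 := by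
  have : Fintype.card (SL2 K) ^ 2 = (Finset.univ : Finset (SL2 K × SL2 K)).card := by
    rw [Finset.card_univ, Fintype.card_prod]; ring
  rw [this, Finset.card_eq_sum_card_fiberwise (f := fun P => trS (wordMap (theWord a b c d) K P))
    (t := Finset.univ) (by simp)]
  simp only [MM]

noncomputable def mm (a b c d : ℤ) (τ : K) : ℕ :=
  (Finset.univ.filter fun z : (K × K) × K => FF a b c d z.1.1 z.1.2 ≠ 0 ∧ phi a b c d z = τ).card

lemma MS_le (a b c d : ℤ) (τ : K) : MS a b c d τ ≤ 
    (Fintype.card K + 2) * (Fintype.card K ^ 2 + 2 * Fintype.card K) * mm a b c d τ := by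
  unfold MS mm
  refine card_le_fib trip _ _ _ ?_ ?_
  · rintro ⟨x, y⟩ h
    simp only [Finset.mem_filter, Finset.mem_univ, true_and] at h ⊢
    refine ⟨h.1.2.1, ?_⟩
    rw [← h.2, word_trace]
    rfl
  · intro z _
    refine le_trans (Finset.card_le_card ?_) (fibre_le a b c d z)
    intro P hP
    simp only [Finset.mem_filter, Finset.mem_univ, true_and] at hP ⊢
    exact ⟨hP.1.1, hP.2⟩

lemma sum_mm_sq (a b c d : ℤ) (ha : a ≠ 0) (hb : b ≠ 0) (hc : c ≠ 0) (hd : d ≠ 0)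
    (hne : ¬ (a = c ∧ b = d)) : ∑ τ : K, mm a b c d τ ^ 2 ≤
    (Fintype.card K + 2) * Fintype.card K ^ 4 +
      10 * (a.natAbs + b.natAbs + c.natAbs + d.natAbs) * Fintype.card K ^ 4 := by
  refine le_trans (le_of_eq ?_) (second_moment (K := K) a b c d ha hb hc hd hne)
  rw [Finset.card_eq_sum_card_fiberwise (f := fun P => phi a b c d P.1)
    (t := Finset.univ) (by simp)]
  apply Finset.sum_congr rfl
  intro τ _
  rw [sq, mm, ← Finset.card_product]
  congr 1
  ext ⟨z, z'⟩
  simp only [Finset.mem_filter, Finset.mem_univ, true_and, Finset.mem_product]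
  constructor
  · rintro ⟨⟨h1, h2⟩, h3, h4⟩
    exact ⟨⟨h1, h3, by rw [h2, h4]⟩, h2⟩
  · rintro ⟨⟨h1, h2, h3⟩, h4⟩
    exact ⟨⟨h1, h4⟩, h2, by rw [← h3, h4]⟩
end

/-! ### Analysis -/

lemma cheb {ι : Type} [Fintype ι] (f : ι → ℝ) (hf : ∀ i, 0 ≤ f i) (T C : ℝ) (hT : 0 < T)
    (h : ∑ i, f i ≤ C) (s : Finset ι) (hs : ∀ i ∈ s, T ≤ f i) : (s.card : ℝ) ≤ C / T := by
  rw [le_div_iff₀ hT]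
  calc (s.card : ℝ) * T = ∑ _i ∈ s, T := by simp
    _ ≤ ∑ i ∈ s, f i := Finset.sum_le_sum hs
    _ ≤ ∑ i, f i := Finset.sum_le_sum_of_subset_of_nonneg (Finset.subset_univ _) (fun i _ _ => hf i)
    _ ≤ C := h

/-- constants -/
noncomputable def cB (n : ℝ) : ℝ := 3 * (5 + 3 * n)
noncomputable def cV (n : ℝ) : ℝ := (80 + 81 * (2 + 10 * n)) + 4 + 2 * cB n

lemma ana_R (q n : ℝ) (hq : 1 ≤ q) (hn : 0 ≤ n) :
    ((q + 2) * (q ^ 2 + 2 * q)) ^ 2 * ((q + 2) * q ^ 4 + 10 * n * q ^ 4) ≤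
      q ^ 11 + (80 + 81 * (2 + 10 * n)) * q ^ 10 := by
  have h0 : 0 ≤ q := by linarith
  have p2 : q ^ 0 ≤ q ^ 3 := pow_le_pow_right₀ hq (by norm_num)
  have p3 : q ^ 1 ≤ q ^ 3 := pow_le_pow_right₀ hq (by norm_num)
  have p4 : q ^ 2 ≤ q ^ 3 := pow_le_pow_right₀ hq (by norm_num)
  have e1 : (q + 2) ^ 4 ≤ q ^ 4 + 80 * q ^ 3 := by nlinarith
  have e3 : q ^ 4 + 80 * q ^ 3 ≤ 81 * q ^ 4 := by
    have : q ^ 3 ≤ q ^ 4 := pow_le_pow_right₀ hq (by norm_num)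
    linarith
  have e2 : ((q + 2) * (q ^ 2 + 2 * q)) ^ 2 * ((q + 2) * q ^ 4 + 10 * n * q ^ 4)
     = (q + 2) ^ 4 * q ^ 7 + (q + 2) ^ 4 * ((2 + 10 * n) * q ^ 6) := by ring
  rw [e2]
  have e4 : (q + 2) ^ 4 * q ^ 7 ≤ (q ^ 4 + 80 * q ^ 3) * q ^ 7 := by gcongr
  have e5 : (q + 2) ^ 4 * ((2 + 10 * n) * q ^ 6) ≤ (81 * q ^ 4) * ((2 + 10 * n) * q ^ 6) := by
    gcongr
    linarith
  nlinarith

lemma ana_G (q n G : ℝ) (hq : 1 ≤ q) (hn : 0 ≤ n) (h2 : G ≤ (q ^ 2 + 2 * q) * q) :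
    (5 * q ^ 2 + n * (q ^ 2 + 2 * q)) * G ≤ cB n * q ^ 5 := by
  have h0 : 0 ≤ q := by linarith
  have a1 : q ≤ q ^ 2 := by nlinarith
  have hG : G ≤ 3 * q ^ 3 := by nlinarith [mul_le_mul_of_nonneg_right a1 h0]
  have a2 : 5 * q ^ 2 + n * (q ^ 2 + 2 * q) ≤ (5 + 3 * n) * q ^ 2 := by
    nlinarith [mul_le_mul_of_nonneg_left a1 hn]
  calc (5 * q ^ 2 + n * (q ^ 2 + 2 * q)) * G ≤ (5 * q ^ 2 + n * (q ^ 2 + 2 * q)) * (3 * q ^ 3) := by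
        gcongr
    _ ≤ ((5 + 3 * n) * q ^ 2) * (3 * q ^ 3) := by gcongr
    _ = _ := by unfold cB; ring

lemma ana_up (q c G M N η : ℝ) (hη : 0 < η) (hη1 : η ≤ 1) (hq1 : 1 ≤ q) (hq : 16 ≤ q * η)
    (hc : q ^ 2 ≤ c + q) (hc' : c ≤ q ^ 2 + 2 * q) (hG : q ^ 3 ≤ G + q ^ 2)
    (hG' : G ≤ (q ^ 2 + 2 * q) * q)
    (hM : M = c * N) (h : |M - q ^ 5| < 2 * (η / 8) * q ^ 5) : |N - G| < η * G := by
  have hq16 : 16 ≤ q := by nlinarith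
  have hcpos : 0 < c := by nlinarith
  have hGpos : 0 < G := by nlinarith [sq_nonneg q, mul_pos (show 0 < q by linarith) (show 0 < q by linarith)]
  rw [abs_lt] at h ⊢
  have q3 : 0 < q ^ 3 := by positivity
  constructor
  · by_contra hcon
    have hN : N ≤ (1 - η) * G := by linarith
    have e1 : c * N ≤ c * ((1 - η) * G) := by gcongr
    have e2 : c * ((1 - η) * G) ≤ (q ^ 2 + 2 * q) * ((1 - η) * ((q ^ 2 + 2 * q) * q)) := by
      have : 0 ≤ 1 - η := by linarith
      gcongr
    have e3 : (1 - η) * (q + 2) ^ 2 ≤ (1 - η / 4) * q ^ 2 := by nlinarith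
    have e4 := mul_le_mul_of_nonneg_right e3 q3.le
    nlinarith
  · by_contra hcon
    have hN : (1 + η) * G ≤ N := by linarith
    have e1 : c * ((1 + η) * G) ≤ c * N := by gcongr
    have e2 : (q ^ 2 - q) * ((1 + η) * (q ^ 3 - q ^ 2)) ≤ c * ((1 + η) * G) := by
      have t1 : q ^ 2 - q ≤ c := by linarith
      have t2 : q ^ 3 - q ^ 2 ≤ G := by linarith
      have t3 : 0 ≤ q ^ 3 - q ^ 2 := by nlinarith [sq_nonneg q]
      gcongr
    have e3 : (1 + η / 4) * q ^ 2 ≤ (1 + η) * (q - 1) ^ 2 := by nlinarith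
    have e4 := mul_le_mul_of_nonneg_right e3 q3.le
    nlinarith

set_option maxHeartbeats 1000000 in
lemma core_fin (a b c d : ℤ) (ha : a ≠ 0) (hb : b ≠ 0) (hc : c ≠ 0) (hd : d ≠ 0)
    (hne : ¬ (a = c ∧ b = d)) (η : ℝ) (hη : 0 < η) (hη1 : η ≤ 1) : ∃ Q0 : ℕ,
    ∀ (K : Type) [Field K] [Fintype K] [DecidableEq K], Q0 ≤ Fintype.card K →
    ∃ Y : Finset (SL2 K), (1 - η) * (Fintype.card (SL2 K) : ℝ) < (Y.card : ℝ) ∧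
      ∀ g ∈ Y, |(NN a b c d g : ℝ) - Fintype.card (SL2 K)| < η * Fintype.card (SL2 K) := by
  obtain ⟨n, hn⟩ : ∃ n : ℕ, n = a.natAbs + b.natAbs + c.natAbs + d.natAbs := ⟨_, rfl⟩
  set δ : ℝ := η / 8 with hδ
  have hδ0 : 0 < δ := by positivity
  set B : ℝ := cV n / δ ^ 2 + cB n / δ + 2 with hB
  obtain ⟨Q0, hQ0⟩ := exists_nat_gt (16 / η + 3 * B / η + 2)
  refine ⟨Q0, fun K _ _ _ hK => ?_⟩
  have hn0 : (0 : ℝ) ≤ n := Nat.cast_nonneg n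
  have hcB : 0 ≤ cB n := by unfold cB; positivity
  have hcV : 0 ≤ cV n := by unfold cV; positivity
  have hB0 : 0 ≤ B := by positivity
  obtain ⟨q, hqdef⟩ : ∃ q : ℝ, q = (Fintype.card K : ℝ) := ⟨_, rfl⟩
  obtain ⟨G, hGdef⟩ : ∃ G : ℝ, G = (Fintype.card (SL2 K) : ℝ) := ⟨_, rfl⟩
  have hqQ : (Q0 : ℝ) ≤ q := by rw [hqdef]; exact_mod_cast hK
  have hpos1 : 0 ≤ 16 / η := by positivity
  have hpos2 : 0 ≤ 3 * B / η := by positivity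
  have hq1 : 1 ≤ q := by linarith
  have hq0 : 0 < q := by linarith
  have hq16 : 16 ≤ q * η := by
    rw [← div_le_iff₀ hη]; linarith
  have hqB : 3 * B < (q - 1) * η := by
    rw [← div_lt_iff₀ hη]; linarith
  have hGle : G ≤ (q ^ 2 + 2 * q) * q := by
    rw [hGdef, hqdef]; exact_mod_cast card_SL_le (K := K)
  have hGge : q ^ 3 ≤ G + q ^ 2 := by
    rw [hGdef, hqdef]; exact_mod_cast card_SL_ge (K := K)
  -- moments
  have sMB : ∑ τ : K, (MB a b c d τ : ℝ) ≤ cB n * q ^ 5 := by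
    refine le_trans ?_ (ana_G q n G hq1 hn0 hGle)
    have h1 := bad_le (K := K) a b c d ha hb hc hd
    rw [← sum_MB, ← hn] at h1
    rw [hGdef, hqdef]
    exact_mod_cast h1
  have sMS : q ^ 6 - 2 * q ^ 5 - cB n * q ^ 5 ≤ ∑ τ : K, (MS a b c d τ : ℝ) := by
    have h1 := sum_MM (K := K) a b c d
    simp only [MM_split, Finset.sum_add_distrib] at h1
    have h2 : ∑ τ : K, (MS a b c d τ : ℝ) + ∑ τ : K, (MB a b c d τ : ℝ) = G ^ 2 := by
      rw [hGdef]; exact_mod_cast h1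
    have h3 : (q ^ 3 - q ^ 2) ^ 2 ≤ G ^ 2 := by
      have t3 : 0 ≤ q ^ 3 - q ^ 2 := by nlinarith [sq_nonneg q]
      have t2 : q ^ 3 - q ^ 2 ≤ G := by linarith
      gcongr
    have h4 : (q ^ 3 - q ^ 2) ^ 2 = q ^ 6 - 2 * q ^ 5 + q ^ 4 := by ring
    have h5 : 0 ≤ q ^ 4 := by positivity
    linarith
  have sMS2 : ∑ τ : K, (MS a b c d τ : ℝ) ^ 2 ≤ q ^ 11 + (80 + 81 * (2 + 10 * (n : ℝ))) * q ^ 10 := by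
    refine le_trans ?_ (ana_R q n hq1 hn0)
    have h1 := sum_mm_sq (K := K) a b c d ha hb hc hd hne
    rw [← hn] at h1
    have h2 : ∑ τ : K, (mm a b c d τ : ℝ) ^ 2 ≤ (q + 2) * q ^ 4 + 10 * n * q ^ 4 := by
      rw [hqdef]; exact_mod_cast h1
    refine le_trans ?_ (mul_le_mul_of_nonneg_left h2 (sq_nonneg _))
    rw [Finset.mul_sum]
    apply Finset.sum_le_sum
    intro τ _
    rw [← mul_pow]
    have h3 := MS_le a b c d τ
    have h4 : (MS a b c d τ : ℝ) ≤ (q + 2) * (q ^ 2 + 2 * q) * mm a b c d τ := by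
      rw [hqdef]; exact_mod_cast h3
    gcongr
  have var : ∑ τ : K, ((MS a b c d τ : ℝ) - q ^ 5) ^ 2 ≤ cV n * q ^ 10 := by
    have e : ∑ τ : K, ((MS a b c d τ : ℝ) - q ^ 5) ^ 2 =
        ∑ τ : K, (MS a b c d τ : ℝ) ^ 2 - 2 * q ^ 5 * ∑ τ : K, (MS a b c d τ : ℝ) + q * q ^ 10 := by
      rw [Finset.mul_sum, ← Finset.sum_sub_distrib, hqdef]
      rw [← nsmul_eq_mul, ← Finset.card_univ, ← Finset.sum_const, ← Finset.sum_add_distrib]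
      apply Finset.sum_congr rfl
      intro τ _
      ring
    rw [e]
    have h1 := mul_le_mul_of_nonneg_left sMS (show 0 ≤ 2 * q ^ 5 by positivity)
    unfold cV
    nlinarith
  -- bad traces
  classical
  let A1 : Finset K := Finset.univ.filter fun τ => δ * q ^ 5 ≤ |(MS a b c d τ : ℝ) - q ^ 5|
  let A2 : Finset K := Finset.univ.filter fun τ => δ * q ^ 5 ≤ (MB a b c d τ : ℝ)
  let A3 : Finset K := Finset.univ.filter fun τ => τ ^ 2 = 4
  have c1 : (A1.card : ℝ) ≤ cV n / δ ^ 2 := by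
    have := cheb (fun τ : K => ((MS a b c d τ : ℝ) - q ^ 5) ^ 2) (fun _ => sq_nonneg _)
      ((δ * q ^ 5) ^ 2) _ (by positivity) var A1 (by
        intro τ hτ
        simp only [A1, Finset.mem_filter, Finset.mem_univ, true_and] at hτ
        rw [← sq_abs ((MS a b c d τ : ℝ) - q ^ 5)]
        gcongr)
    refine this.trans (le_of_eq ?_)
    field_simp
  have c2 : (A2.card : ℝ) ≤ cB n / δ := by
    have := cheb (fun τ : K => (MB a b c d τ : ℝ)) (fun _ => Nat.cast_nonneg _)
      (δ * q ^ 5) _ (by positivity) sMB A2 (by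
        intro τ hτ
        simpa only [A2, Finset.mem_filter, Finset.mem_univ, true_and] using hτ)
    refine this.trans (le_of_eq ?_)
    field_simp
  have c3 : (A3.card : ℝ) ≤ 2 := by
    have h1 : A3 ⊆ {2, -2} := by
      intro τ hτ
      simp only [A3, Finset.mem_filter, Finset.mem_univ, true_and] at hτ
      have : (τ - 2) * (τ + 2) = 0 := by linear_combination hτ
      rcases mul_eq_zero.1 this with h | h
      · simp [sub_eq_zero.1 h]
      · simp [eq_neg_of_add_eq_zero_left h]
    exact_mod_cast (Finset.card_le_card h1).trans Finset.card_le_two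
  let A : Finset K := A1 ∪ A2 ∪ A3
  have cA : (A.card : ℝ) ≤ B := by
    have h1 : (A.card : ℝ) ≤ A1.card + A2.card + A3.card := by
      exact_mod_cast (Finset.card_union_le _ _).trans
        (Nat.add_le_add_right (Finset.card_union_le _ _) _)
    linarith
  let Y : Finset (SL2 K) := Finset.univ.filter fun g => trS g ∉ A
  have cY : ((Finset.univ.filter fun g : SL2 K => ¬ (trS g ∉ A)).card : ℝ) ≤ B * (q ^ 2 + 2 * q) := by
    have h1 : (Finset.univ.filter fun g : SL2 K => ¬ (trS g ∉ A)).card ≤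
        (Fintype.card K ^ 2 + 2 * Fintype.card K) * A.card := by
      refine card_le_fib trS _ _ _ ?_ ?_
      · intro x hx
        simpa only [Finset.mem_filter, Finset.mem_univ, true_and, not_not] using hx
      · intro τ _
        refine le_trans (Finset.card_le_card ?_) (card_tr_le τ)
        intro x hx
        simp only [Finset.mem_filter, Finset.mem_univ, true_and] at hx ⊢
        exact hx.2
    have h2 : ((Finset.univ.filter fun g : SL2 K => ¬ (trS g ∉ A)).card : ℝ) ≤
        (q ^ 2 + 2 * q) * A.card := by
      rw [hqdef]; exact_mod_cast h1
    refine h2.trans ?_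
    rw [mul_comm]
    gcongr
  refine ⟨Y, ?_, ?_⟩
  · have h1 : (Y.card : ℝ) + ((Finset.univ.filter fun g : SL2 K => ¬ (trS g ∉ A)).card : ℝ) = G := by
      rw [hGdef]
      exact_mod_cast Finset.card_filter_add_card_filter_not (s := Finset.univ) (fun g : SL2 K => trS g ∉ A)
    rw [← hGdef]
    have h2 : B * (q ^ 2 + 2 * q) ≤ 3 * B * q ^ 2 := by
      have t : q ≤ q ^ 2 := by nlinarith only [hq1]
      have t2 := mul_le_mul_of_nonneg_left t hB0
      linarith only [t2]
    have h3 : 3 * B * q ^ 2 < (q - 1) * η * q ^ 2 := by gcongr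
    have h4 : η * (q ^ 3 - q ^ 2) ≤ η * G := by
      have : q ^ 3 - q ^ 2 ≤ G := by linarith
      gcongr
    linarith only [h1, h2, h3, h4, cY, show (q - 1) * η * q ^ 2 = η * (q ^ 3 - q ^ 2) by ring]
  · intro g hg
    simp only [Y, A, A1, A2, A3, Finset.mem_filter, Finset.mem_univ, true_and, Finset.mem_union, not_or, not_le] at hg
    obtain ⟨⟨g1, g2⟩, g3⟩ := hg
    rw [← hGdef]
    have hM := MM_eq a b c d g g3
    refine ana_up q ((Finset.univ.filter fun x : SL2 K => trS x = trS g).card : ℝ) G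
      (MM a b c d (trS g) : ℝ) _ η hη hη1 hq1 hq16 ?_ ?_ hGge hGle (by exact_mod_cast hM) ?_
    · rw [hqdef]; exact_mod_cast card_tr_ge (trS g)
    · rw [hqdef]; exact_mod_cast card_tr_le (trS g)
    · rw [MM_split, Nat.cast_add, ← hδ]
      have h0 : (0 : ℝ) ≤ MB a b c d (trS g) := Nat.cast_nonneg _
      rw [abs_lt] at g1 ⊢
      have h5 : 0 < δ * q ^ 5 := by positivity
      constructor <;> linarith only [g1.1, g1.2, g2, h0, h5]

lemma core (a b c d : ℤ) (ha : a ≠ 0) (hb : b ≠ 0) (hc : c ≠ 0) (hd : d ≠ 0)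
    (hne : ¬ (a = c ∧ b = d)) (η : ℝ) (hη : 0 < η) (hη1 : η ≤ 1) : ∃ Q0 : ℕ,
    ∀ (K : Type) [Field K] [Finite K], Q0 ≤ Nat.card K →
      IsEquidistributed (wordMap (theWord a b c d) K) η := by
  obtain ⟨Q0, h⟩ := core_fin a b c d ha hb hc hd hne η hη hη1
  refine ⟨Q0, fun K _ _ hK => ?_⟩
  classical
  haveI : Fintype K := Fintype.ofFinite K
  rw [Nat.card_eq_fintype_card] at hK
  obtain ⟨Y, h1, h2⟩ := h K hK
  have hpos : (0 : ℝ) < Fintype.card (SL2 K) := by exact_mod_cast Fintype.card_pos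
  refine ⟨(Y : Set (SL2 K)), ?_, ?_⟩
  · rw [Nat.card_eq_fintype_card]
    simpa using h1
  · intro g hg
    have h3 := h2 g hg
    have e1 : Nat.card {x : SL2 K × SL2 K // wordMap (theWord a b c d) K x = g} = NN a b c d g := by
      rw [Nat.card_eq_fintype_card, Fintype.card_subtype]; rfl
    rw [e1, Nat.card_prod, Nat.card_eq_fintype_card, Nat.cast_mul, mul_div_assoc,
      mul_div_assoc, mul_div_assoc, div_self hpos.ne', mul_one]
    exact h3

lemma IsEquidistributed.mono {X Y : Type*} {f : X → Y} {e e' : ℝ} (h : IsEquidistributed f e)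
    (hee : e ≤ e') : IsEquidistributed f e' := by
  obtain ⟨Y', h1, h2⟩ := h
  refine ⟨Y', lt_of_le_of_lt ?_ h1, fun y hy => lt_of_lt_of_le (h2 y hy) ?_⟩
  · gcongr
  · gcongr

lemma family_of_core (w : FreeGroup (Fin 2))
    (h : ∀ η : ℝ, 0 < η → η ≤ 1 → ∃ Q0 : ℕ, ∀ (K : Type) [Field K] [Finite K], Q0 ≤ Nat.card K →
      IsEquidistributed (wordMap w K) η) : IsEquidistributedFamily w := by
  let S : ℕ → Set ℝ := fun m => {e | 0 < e ∧ ∀ (K : Type) [Field K] [Finite K], m ≤ Nat.card K →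
      IsEquidistributed (wordMap w K) e}
  have hbdd : ∀ m, BddBelow (S m) := fun m => ⟨0, fun e he => he.1.le⟩
  obtain ⟨Q1, hQ1⟩ := h 1 one_pos le_rfl
  have hS1 : ∀ m, Q1 ≤ m → (S m).Nonempty := fun m hm =>
    ⟨1, one_pos, fun K _ _ hK => hQ1 K (hm.trans hK)⟩
  refine ⟨fun m => sInf (S m) + 1 / ((m : ℝ) + 1), ?_, ?_⟩
  · rw [← add_zero (0 : ℝ)]
    refine Filter.Tendsto.add ?_ tendsto_one_div_add_atTop_nhds_zero_nat
    rw [Metric.tendsto_atTop]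
    intro e he
    obtain ⟨Q, hQ⟩ := h (min (e / 2) 1) (by positivity) (min_le_right _ _)
    refine ⟨Q, fun m hm => ?_⟩
    have h1 : sInf (S m) ≤ min (e / 2) 1 :=
      csInf_le (hbdd m) ⟨by positivity, fun K _ _ hK => hQ K (hm.trans hK)⟩
    have h2 : 0 ≤ sInf (S m) := Real.sInf_nonneg fun x hx => hx.1.le
    rw [Real.dist_eq, sub_zero, abs_of_nonneg h2]
    have := min_le_left (e / 2) 1
    linarith
  · intro p hp
    haveI : Fact p.Prime := ⟨hp⟩
    filter_upwards [Filter.eventually_ge_atTop (max 1 Q1)] with n hn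
    have hn1 : n ≠ 0 := by have := le_max_left 1 Q1; omega
    have hQn : Q1 ≤ p ^ n :=
      ((le_max_right 1 Q1).trans hn).trans (Nat.lt_pow_self hp.one_lt).le
    have hlt : sInf (S (p ^ n)) < sInf (S (p ^ n)) + 1 / (((p ^ n : ℕ) : ℝ) + 1) := by
      have : 0 < 1 / (((p ^ n : ℕ) : ℝ) + 1) := by positivity
      linarith
    obtain ⟨e, he, hlt'⟩ := exists_lt_of_csInf_lt (hS1 _ hQn) hlt
    exact (he.2 (GaloisField p n) (GaloisField.card p n hn1).ge).mono hlt'.le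

theorem complexity_two_equidistributed_or_square (a b c d : ℤ)
    (ha : a ≠ 0) (hb : b ≠ 0) (hc : c ≠ 0) (hd : d ≠ 0) :
    IsEquidistributedFamily
      (FreeGroup.of (0 : Fin 2) ^ a * FreeGroup.of (1 : Fin 2) ^ b *
        FreeGroup.of (0 : Fin 2) ^ c * FreeGroup.of (1 : Fin 2) ^ d) ∨
      (a = c ∧ b = d) := by
  by_cases hne : a = c ∧ b = d
  · exact Or.inr hne
  · exact Or.inl (family_of_core (theWord a b c d) (core a b c d ha hb hc hd hne))
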